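/- arXiv:2204.00580 — 4 statements merged into one kernel-verified Lean document; each statement's English description precedes it below -/
import Mathlib

section
/- (Proposition 1, semiglobal practical form) For every r₀ > 0, δ > 0 and d > 0 there exist t̄ > 0 and γ* > 0 such that for every γ ∈ (0, γ*) and every x₀ with |x₀ − x*| ≤ r₀, every solution x : [0,∞) → ℝ of the extremum-seeking system ẋ(t) = −γ·h(x(t) + δ sin(2πt))·sin(2πt) with x(0) = x₀ is bounded and satisfies |x(t) − x*| ≤ δ + d for all t ≥ t̄/γ. -/
open Real Filter

/-!
Over one period of a `T`-periodic field `γ f`, a solution moves by `O(γ)`, so freezing the state in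
`f` costs only `o(γ)`: the sampled sequence `x (n T)` follows the net drift `∫₀ᵀ f(t, y) dt`. If
that drift points towards the interval `[p - δ, p + δ]` from outside, compactness turns this into a
uniform decrease of `|x (n T) - p|` by `γ c` per period until the interval is reached up to a small
margin, hence within a time of order `1 / γ`.

For extremum seeking the dither has mean zero, so the drift is
`-∫₀ᵀ (h (y + δ s(t)) - h y) s(t) dt`. As soon as `|y - p| ≥ δ`, the dithered points
`y + δ s(t)` stay on one side of the minimiser `p`, where `h` is strictly monotone, and the
integrand has a constant sign.
-/

section StrictMonotonicity

open Set

theorem sub_mul_sub_pos_of_strictMonoOn {R : Type*} [Ring R] [LinearOrder R]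
    [IsStrictOrderedRing R] {g : R → R} {S : Set R} (hg : StrictMonoOn g S) {a b : R}
    (ha : a ∈ S) (hb : b ∈ S) (hab : a ≠ b) : 0 < (g b - g a) * (b - a) := by
  rcases hab.lt_or_gt with hlt | hgt
  · exact mul_pos (sub_pos.2 (hg ha hb hlt)) (sub_pos.2 hlt)
  · exact mul_pos_of_neg_of_neg (sub_neg.2 (hg hb ha hgt)) (sub_neg.2 hgt)

theorem injOn_of_forall_le_dist {X Y : Type*} [MetricSpace X] [PseudoMetricSpace Y] {g : X → Y}
    {α : ℝ → ℝ} (hα : ∀ u, 0 < u → 0 < α u) {S : Set X}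
    (hg : ∀ x ∈ S, ∀ y ∈ S, α (dist x y) ≤ dist (g x) (g y)) : InjOn g S := by
  intro x hx y hy hxy
  by_contra hne
  have hdist := (hα _ (dist_pos.2 hne)).trans_le (hg x hx y hy)
  exact hdist.ne' (by rw [hxy, dist_self])

variable {X Y : Type*} [ConditionallyCompleteLinearOrder X] [TopologicalSpace X] [OrderTopology X]
  [DenselyOrdered X] [LinearOrder Y] [TopologicalSpace Y] [OrderClosedTopology Y]
  {g : X → Y} {a : X}

theorem strictMonoOn_Ici_of_injOn (hg : ContinuousOn g (Ici a)) (hinj : InjOn g (Ici a))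
    (hmin : IsMinOn g (Ici a) a) : StrictMonoOn g (Ici a) :=
  fun _ hu _ hv huv ↦
    (hg.mono Icc_subset_Ici_self).strictMonoOn_of_injOn_Icc hv (hmin hv)
      (hinj.mono Icc_subset_Ici_self) ⟨hu, huv.le⟩ (right_mem_Icc.2 hv) huv

theorem strictAntiOn_Iic_of_injOn (hg : ContinuousOn g (Iic a)) (hinj : InjOn g (Iic a))
    (hmin : IsMinOn g (Iic a) a) : StrictAntiOn g (Iic a) :=
  fun _ hu _ hv huv ↦
    (hg.mono Icc_subset_Iic_self).strictAntiOn_of_injOn_Icc hu (hmin hu)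
      (hinj.mono Icc_subset_Iic_self) (left_mem_Icc.2 hu) ⟨huv.le, hv⟩ huv

theorem strictAntiOn_Iic_and_strictMonoOn_Ici_of_forall_le_abs_sub {h : ℝ → ℝ}
    (hh : Continuous h) {p : ℝ} (hmin : ∀ x, h p ≤ h x) {α : ℝ → ℝ}
    (hα : ∀ u, 0 < u → 0 < α u)
    (hlb : ∀ x y, 0 ≤ (x - p) * (y - p) → α |y - x| ≤ |h y - h x|) :
    StrictAntiOn h (Iic p) ∧ StrictMonoOn h (Ici p) := by
  constructor
  · exact strictAntiOn_Iic_of_injOn hh.continuousOn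
      (injOn_of_forall_le_dist hα fun x hx y hy ↦ hlb y x
        (mul_nonneg_of_nonpos_of_nonpos (sub_nonpos.2 hy) (sub_nonpos.2 hx))) fun x _ ↦ hmin x
  · exact strictMonoOn_Ici_of_injOn hh.continuousOn
      (injOn_of_forall_le_dist hα fun x hx y hy ↦ hlb y x
        (mul_nonneg (sub_nonneg.2 hy) (sub_nonneg.2 hx))) fun x _ ↦ hmin x

end StrictMonotonicity

section Averaging

open Set Metric

theorem le_max_sub_natCast_mul_of_forall_succ_le {R : Type*} [Ring R] [LinearOrder R]
    [IsStrictOrderedRing R] {u : ℕ → R} {r b c : R} (hc : 0 ≤ c) (h₀ : u 0 ≤ r)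
    (hstep : ∀ n, u n ≤ max r b → u (n + 1) ≤ max (u n - c) b) (n : ℕ) :
    u n ≤ max (r - n * c) b := by
  induction n with
  | zero => simp [h₀]
  | succ n ih =>
    have hn : u n ≤ max r b := ih.trans (max_le_max_right b (sub_le_self r (by positivity)))
    refine (hstep n hn).trans (max_le ?_ (le_max_right _ _))
    rw [Nat.cast_succ, add_one_mul, ← sub_sub]
    exact (sub_le_sub_right ih c).trans <|
      (max_sub_sub_right _ _ c).ge.trans (max_le_max_left _ (sub_le_self b hc))

theorem abs_sub_le_max_of_approach {p δ m c y z : ℝ} (hm : m ≤ δ) (hyz : |z - y| ≤ m)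
    (hleft : y ≤ p - δ → y + c ≤ z) (hright : p + δ ≤ y → z ≤ y - c) :
    |z - p| ≤ max (|y - p| - c) (δ + m) := by
  obtain ⟨hlo, hhi⟩ := abs_le.1 hyz
  rcases le_total y (p - δ) with hy | hy
  · refine le_max_of_le_left ?_
    rw [abs_of_nonpos (by linarith : y - p ≤ 0), abs_of_nonpos (by linarith)]
    linarith [hleft hy]
  rcases le_total (p + δ) y with hy' | hy'
  · refine le_max_of_le_left ?_
    rw [abs_of_nonneg (by linarith : 0 ≤ y - p), abs_of_nonneg (by linarith)]
    linarith [hright hy']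
  · exact le_max_of_le_right (abs_le.2 ⟨by linarith, by linarith⟩)

theorem le_floor_div_mul_of_div_le {r c T γ t : ℝ} (hc : 0 < c) (hT : 0 < T) (hγ : 0 < γ)
    (hγ₁ : γ ≤ 1) (ht : (r / c + 1) * T / γ ≤ t) : r ≤ ⌊t / T⌋₊ * (γ * c) := by
  have htT : r / c + 1 ≤ t / T * γ := by
    rwa [div_mul_eq_mul_div, le_div_iff₀ hT, ← div_le_iff₀ hγ]
  have hrc : r / c ≤ ⌊t / T⌋₊ * γ := by
    nlinarith [Nat.lt_floor_add_one (t / T)]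
  rwa [← mul_assoc, ← div_le_iff₀ hc]

theorem exists_pos_forall_le_and_forall_le_neg {X : Type*} [TopologicalSpace X] {F : X → ℝ}
    (hF : Continuous F) {K A B : Set X} (hK : IsCompact K) (hA : IsClosed A) (hB : IsClosed B)
    (hpos : ∀ y ∈ A, 0 < F y) (hneg : ∀ y ∈ B, F y < 0) :
    ∃ c > 0, ∀ y ∈ K, (y ∈ A → c ≤ F y) ∧ (y ∈ B → F y ≤ -c) := by
  obtain ⟨c₁, hc₁, hFA⟩ := (hK.inter_right hA).exists_forall_le' hF.continuousOn
    fun y hy ↦ hpos y hy.2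
  obtain ⟨c₂, hc₂, hFB⟩ := (hK.inter_right hB).exists_forall_le' hF.neg.continuousOn
    fun y hy ↦ neg_pos.2 (hneg y hy.2)
  exact ⟨min c₁ c₂, lt_min hc₁ hc₂, fun y hy ↦
    ⟨fun hyA ↦ (min_le_left _ _).trans (hFA y ⟨hy, hyA⟩),
      fun hyB ↦ le_neg_of_le_neg ((min_le_right _ _).trans (hFB y ⟨hy, hyB⟩))⟩⟩

variable {E : Type*} [NormedAddCommGroup E] [NormedSpace ℝ E]

theorem norm_sub_le_of_norm_deriv_right_lt_of_norm_sub_le {x x' : ℝ → E} {a b C R : ℝ}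
    (hC : 0 ≤ C) (hCR : C * (b - a) ≤ R) (hx : ContinuousOn x (Icc a b))
    (hx' : ∀ t ∈ Ico a b, HasDerivWithinAt x (x' t) (Ici t) t)
    (hbound : ∀ t ∈ Ico a b, ‖x t - x a‖ ≤ R → ‖x' t‖ < C) {t : ℝ} (ht : t ∈ Icc a b) :
    ‖x t - x a‖ ≤ C * (t - a) := by
  refine image_norm_le_of_norm_deriv_right_lt_deriv_boundary (f := fun t ↦ x t - x a)
    (B := fun t ↦ C * (t - a)) (B' := fun _ ↦ C) (hx.sub continuousOn_const)
    (fun t ht ↦ (hx' t ht).sub_const _) (by simp)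
    (fun t ↦ by simpa using ((hasDerivAt_id t).sub_const a).const_mul C)
    (fun t ht heq ↦ hbound t ht ?_) ht
  rw [heq]
  exact le_trans (by gcongr; exact ht.2.le) hCR

theorem isIntegralCurveOn_Icc_comp_add_natCast_mul {v : ℝ → E → E} {x : ℝ → E} {T : ℝ}
    (hT : 0 ≤ T) (hv : Function.Periodic v T) (hx : IsIntegralCurveOn x v (Ici 0)) (n : ℕ) :
    IsIntegralCurveOn (fun t ↦ x (t + n * T)) v (Icc 0 T) := by
  have hshift := hx.comp_add (n * T)
  rw [show v ∘ (· + n * T) = v from funext (hv.nat_mul n)] at hshift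
  refine hshift.mono fun t ht ↦ ⟨t + n * T, ?_, by simp⟩
  exact add_nonneg ht.1 (by positivity)

/-- The net drift over one period of a field `f` with the state frozen at `y`, that is, `T` times
the averaged vector field. -/
noncomputable def netDrift (f : ℝ → E → E) (T : ℝ) (y : E) : E :=
  ∫ t in (0 : ℝ)..T, f t y

theorem continuous_netDrift {f : ℝ → E → E} (hf : Continuous f.uncurry) (T : ℝ) :
    Continuous (netDrift f T) :=
  intervalIntegral.continuous_parametric_intervalIntegral_of_continuous'
    (f := fun y t ↦ f t y) (hf.comp continuous_swap) 0 T

theorem norm_sub_sub_smul_netDrift_le [CompleteSpace E] {f : ℝ → E → E}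
    (hf : Continuous f.uncurry) {T γ ε : ℝ} (hT : 0 ≤ T) (hγ : 0 ≤ γ) {x : ℝ → E}
    (hx : IsIntegralCurveOn x (fun t y ↦ γ • f t y) (Icc 0 T))
    (hε : ∀ t ∈ Icc 0 T, ‖f t (x t) - f t (x 0)‖ ≤ ε) :
    ‖x T - x 0 - γ • netDrift f T (x 0)‖ ≤ γ * (ε * T) := by
  have hxc : ContinuousOn x (Icc 0 T) := fun t ht ↦ (hx t ht).continuousWithinAt
  have hcurve : IntervalIntegrable (fun t ↦ f t (x t)) MeasureTheory.volume 0 T :=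
    ContinuousOn.intervalIntegrable_of_Icc hT (hf.comp_continuousOn (continuousOn_id.prodMk hxc))
  have hfrozen : IntervalIntegrable (fun t ↦ f t (x 0)) MeasureTheory.volume 0 T :=
    (hf.comp (Continuous.prodMk_left (x 0))).intervalIntegrable 0 T
  have hftc : ∫ t in (0 : ℝ)..T, γ • f t (x t) = x T - x 0 :=
    intervalIntegral.integral_eq_sub_of_hasDerivAt_of_le hT hxc
      (fun t ht ↦ (hx t (Ioo_subset_Icc_self ht)).hasDerivAt (Icc_mem_nhds ht.1 ht.2))
      (hcurve.smul γ)
  have herror : ‖∫ t in (0 : ℝ)..T, (f t (x t) - f t (x 0))‖ ≤ ε * T := by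
    simpa [abs_of_nonneg hT] using intervalIntegral.norm_integral_le_of_norm_le_const
      fun t ht ↦ hε t (Ioc_subset_Icc_self (uIoc_of_le hT ▸ ht))
  rw [← hftc, netDrift, intervalIntegral.integral_smul, ← smul_sub,
    ← intervalIntegral.integral_sub hcurve hfrozen, norm_smul, norm_of_nonneg hγ]
  gcongr

variable [ProperSpace E] {f : ℝ → E → E} {T : ℝ} {K : Set E}

theorem exists_forall_norm_sub_le_of_isIntegralCurveOn_smul (hf : Continuous f.uncurry)
    (hT : 0 < T) (hK : IsCompact K) {m : ℝ} (hm : 0 < m) :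
    ∃ γ₀ : ℝ, 0 < γ₀ ∧ ∀ γ ∈ Ioo 0 γ₀, ∀ x : ℝ → E,
      IsIntegralCurveOn x (fun t y ↦ γ • f t y) (Icc 0 T) → x 0 ∈ K →
        ∀ t ∈ Icc 0 T, ‖x t - x 0‖ ≤ m := by
  obtain ⟨B, hB⟩ := ((isCompact_Icc (a := 0) (b := T)).prod
    (hK.cthickening (r := m))).exists_bound_of_continuousOn hf.continuousOn
  refine ⟨m / ((|B| + 1) * T), by positivity, fun γ ⟨hγ, hγ₀⟩ x hx hx₀ t ht ↦ ?_⟩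
  have hγm : γ * (|B| + 1) * T ≤ m := by
    rw [mul_assoc]; exact ((lt_div_iff₀ (by positivity)).1 hγ₀).le
  have hspeed : ∀ t ∈ Ico 0 T, ‖x t - x 0‖ ≤ m → ‖γ • f t (x t)‖ < γ * (|B| + 1) := by
    intro t ht htm
    have hmem : x t ∈ cthickening m K :=
      mem_cthickening_of_dist_le _ _ _ _ hx₀ (by rwa [dist_eq_norm])
    have hfB : ‖f t (x t)‖ ≤ B := hB (t, x t) ⟨Ico_subset_Icc_self ht, hmem⟩
    rw [norm_smul, norm_of_nonneg hγ.le]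
    gcongr
    linarith [le_abs_self B]
  calc ‖x t - x 0‖ ≤ γ * (|B| + 1) * (t - 0) :=
        norm_sub_le_of_norm_deriv_right_lt_of_norm_sub_le (by positivity) (by simpa using hγm)
          (fun t ht ↦ (hx t ht).continuousWithinAt)
          (fun t ht ↦ (hx t (Ico_subset_Icc_self ht)).mono_of_mem_nhdsWithin
            (Icc_mem_nhdsGE_of_mem ht)) hspeed ht
    _ ≤ γ * (|B| + 1) * T := by gcongr; linarith [ht.2]
    _ ≤ m := hγm

theorem exists_forall_norm_sub_sub_smul_netDrift_le (hf : Continuous f.uncurry) (hT : 0 < T)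
    (hK : IsCompact K) {ε : ℝ} (hε : 0 < ε) :
    ∃ γ₀ : ℝ, 0 < γ₀ ∧ ∀ γ ∈ Ioo 0 γ₀, ∀ x : ℝ → E,
      IsIntegralCurveOn x (fun t y ↦ γ • f t y) (Icc 0 T) → x 0 ∈ K →
        ‖x T - x 0 - γ • netDrift f T (x 0)‖ ≤ γ * ε := by
  have hcompact := (isCompact_Icc (a := 0) (b := T)).prod (hK.cthickening (r := 1))
  obtain ⟨η, hη, huc⟩ := uniformContinuousOn_iff_le.1
    (hcompact.uniformContinuousOn_of_continuous hf.continuousOn) (ε / T) (by positivity)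
  obtain ⟨γ₀, hγ₀, hclose⟩ := exists_forall_norm_sub_le_of_isIntegralCurveOn_smul hf hT hK
    (lt_min one_pos hη)
  refine ⟨γ₀, hγ₀, fun γ hγ x hx hx₀ ↦ ?_⟩
  have hfreeze : ∀ t ∈ Icc 0 T, ‖f t (x t) - f t (x 0)‖ ≤ ε / T := by
    intro t ht
    have hxt : dist (x t) (x 0) ≤ min 1 η := by
      simpa [dist_eq_norm] using hclose γ hγ x hx hx₀ t ht
    rw [← dist_eq_norm]
    refine huc (t, x t) ⟨ht, ?_⟩ (t, x 0) ⟨ht, self_subset_cthickening K hx₀⟩ ?_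
    · exact mem_cthickening_of_dist_le _ _ _ _ hx₀ (hxt.trans (min_le_left _ _))
    · simpa [Prod.dist_eq] using hxt.trans (min_le_right _ _)
  simpa [div_mul_cancel₀ ε hT.ne'] using
    norm_sub_sub_smul_netDrift_le hf hT.le hγ.1.le hx hfreeze

end Averaging

section ScalarPracticalStability

open Set Metric

variable {f : ℝ → ℝ → ℝ} {T p δ : ℝ}

theorem exists_abs_sub_le_max_of_isIntegralCurveOn_Icc (hf : Continuous f.uncurry) (hT : 0 < T)
    (hpos : ∀ y ≤ p - δ, 0 < netDrift f T y) (hneg : ∀ y ≥ p + δ, netDrift f T y < 0)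
    (ρ : ℝ) {m : ℝ} (hm : 0 < m) (hmδ : m ≤ δ) :
    ∃ c γ₀ : ℝ, 0 < c ∧ 0 < γ₀ ∧ ∀ γ ∈ Ioo 0 γ₀, ∀ x : ℝ → ℝ,
      IsIntegralCurveOn x (fun t y ↦ γ • f t y) (Icc 0 T) → |x 0 - p| ≤ ρ →
        (∀ t ∈ Icc 0 T, |x t - x 0| ≤ m) ∧ |x T - p| ≤ max (|x 0 - p| - γ * c) (δ + m) := by
  have hK : IsCompact (closedBall p ρ) := isCompact_closedBall p ρ
  obtain ⟨c, hc, hdrift⟩ := exists_pos_forall_le_and_forall_le_neg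
    (continuous_netDrift hf T) hK isClosed_Iic isClosed_Ici hpos hneg
  obtain ⟨γ₁, hγ₁, hclose⟩ := exists_forall_norm_sub_le_of_isIntegralCurveOn_smul hf hT hK hm
  obtain ⟨γ₂, hγ₂, havg⟩ := exists_forall_norm_sub_sub_smul_netDrift_le hf hT hK (half_pos hc)
  refine ⟨c / 2, min γ₁ γ₂, half_pos hc, lt_min hγ₁ hγ₂, fun γ ⟨hγ, hγ₀⟩ x hx hx₀ ↦ ?_⟩
  have hnear := hclose γ ⟨hγ, hγ₀.trans_le (min_le_left _ _)⟩ x hx hx₀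
  obtain ⟨hlo, hhi⟩ := abs_le.1 (havg γ ⟨hγ, hγ₀.trans_le (min_le_right _ _)⟩ x hx hx₀)
  rw [smul_eq_mul] at hlo hhi
  refine ⟨hnear, abs_sub_le_max_of_approach hmδ (hnear T (right_mem_Icc.2 hT.le))
    (fun hy ↦ ?_) fun hy ↦ ?_⟩
  · linarith [mul_le_mul_of_nonneg_left ((hdrift (x 0) hx₀).1 hy) hγ.le]
  · linarith [mul_le_mul_of_nonneg_left ((hdrift (x 0) hx₀).2 hy) hγ.le]

theorem exists_practical_convergence_of_netDrift (hf : Continuous f.uncurry) (hT : 0 < T)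
    (hper : Function.Periodic f T)
    (hpos : ∀ y ≤ p - δ, 0 < netDrift f T y) (hneg : ∀ y ≥ p + δ, netDrift f T y < 0)
    {r d : ℝ} (hr : 0 ≤ r) (hd : 0 < d) :
    ∃ τ γ₀ : ℝ, 0 < τ ∧ 0 < γ₀ ∧ ∀ γ ∈ Ioo 0 γ₀, ∀ x : ℝ → ℝ,
      IsIntegralCurveOn x (fun t y ↦ γ • f t y) (Ici 0) → |x 0 - p| ≤ r →
        (∀ t, 0 ≤ t → |x t - p| ≤ max r δ + d) ∧ ∀ t, τ / γ ≤ t → |x t - p| ≤ δ + d := by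
  have hδ : 0 < δ := by
    by_contra! hδ
    exact lt_asymm (hpos p (by linarith)) (hneg p (by linarith))
  obtain ⟨m, hm, hmδ, hmd⟩ : ∃ m > 0, m ≤ δ ∧ m ≤ d / 2 :=
    ⟨min δ (d / 2), by positivity, min_le_left _ _, min_le_right _ _⟩
  obtain ⟨c, γ₀, hc, hγ₀, hperiod⟩ := exists_abs_sub_le_max_of_isIntegralCurveOn_Icc hf hT
    hpos hneg (max r (δ + m)) hm hmδ
  refine ⟨(r / c + 1) * T, min 1 γ₀, by positivity, by positivity, fun γ ⟨hγ, hγ'⟩ x hx hx₀ ↦ ?_⟩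
  have hcurve := isIntegralCurveOn_Icc_comp_add_natCast_mul hT.le
    (fun t ↦ by simp only [hper t]) hx
  have hstep (n : ℕ) (hn : |x (n * T) - p| ≤ max r (δ + m)) :=
    hperiod γ ⟨hγ, hγ'.trans_le (min_le_right _ _)⟩ _ (hcurve n) (by simpa using hn)
  have hsample (n : ℕ) : |x (n * T) - p| ≤ max (r - n * (γ * c)) (δ + m) := by
    refine le_max_sub_natCast_mul_of_forall_succ_le (u := fun n : ℕ ↦ |x (n * T) - p|)
      (by positivity) (by simpa using hx₀) (fun n hn ↦ ?_) n
    simpa [add_one_mul, add_comm T] using (hstep n hn).2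
  have hsample' (n : ℕ) : |x (n * T) - p| ≤ max r (δ + m) :=
    (hsample n).trans (max_le_max_right _ (sub_le_self r (by positivity)))
  have hbetween {t : ℝ} (ht : 0 ≤ t) : |x t - p| ≤ |x (⌊t / T⌋₊ * T) - p| + m := by
    have hfloor : ⌊t / T⌋₊ * T ≤ t := (le_div_iff₀ hT).1 (Nat.floor_le (by positivity))
    have hceil : t < (⌊t / T⌋₊ + 1) * T := (div_lt_iff₀ hT).1 (Nat.lt_floor_add_one _)
    have hnear := (hstep _ (hsample' ⌊t / T⌋₊)).1 (t - ⌊t / T⌋₊ * T)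
      ⟨by linarith, by linarith⟩
    rw [sub_add_cancel, zero_add] at hnear
    linarith [abs_sub_le (x t) (x (⌊t / T⌋₊ * T)) p]
  refine ⟨fun t ht ↦ ?_, fun t ht ↦ ?_⟩
  · have hmax : max r (δ + m) ≤ max r δ + m :=
      max_le (by linarith [le_max_left r δ]) (by linarith [le_max_right r δ])
    linarith [hbetween ht, hsample' ⌊t / T⌋₊]
  · have hcount := le_floor_div_mul_of_div_le hc hT hγ (hγ'.le.trans (min_le_left _ _)) ht
    have hlate := (hsample ⌊t / T⌋₊).trans (max_le (by linarith) le_rfl)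
    linarith [hbetween (t := t) (le_trans (by positivity) ht)]

end ScalarPracticalStability

section ExtremumSeeking

open Set

/-- A `T`-periodic dither signal: continuous, nontrivial, of mean zero, and with amplitude
normalised to at most one, so that `δ * s t` perturbs the state by at most `δ`. -/
structure IsDither (s : ℝ → ℝ) (T : ℝ) : Prop where
  period_pos : 0 < T
  continuous : Continuous s
  periodic : Function.Periodic s T
  abs_le_one : ∀ t, |s t| ≤ 1
  integral_eq_zero : ∫ t in (0 : ℝ)..T, s t = 0
  ne_zero : s ≠ 0

theorem isDither_sin_two_pi_mul : IsDither (fun t ↦ sin (2 * π * t)) 1 where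
  period_pos := one_pos
  continuous := by fun_prop
  periodic t := by simp [mul_add]
  abs_le_one t := abs_sin_le_one _
  integral_eq_zero := by
    rw [intervalIntegral.integral_comp_mul_left (fun u ↦ sin u) two_pi_pos.ne']
    simp
  ne_zero h := by
    have hquarter := congrFun h (1 / 4)
    rw [show 2 * π * (1 / 4) = π / 2 by ring, sin_pi_div_two] at hquarter
    exact one_ne_zero hquarter

variable {h s : ℝ → ℝ} {T δ : ℝ}

/-- The right-hand side of the extremum-seeking scheme with unit gain: the measured value
`h (y + δ s(t))` demodulated by the dither `s`. -/
def extremumSeekingField (h s : ℝ → ℝ) (δ t y : ℝ) : ℝ :=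
  -(h (y + δ * s t) * s t)

theorem continuous_uncurry_extremumSeekingField (hh : Continuous h) (hs : Continuous s) (δ : ℝ) :
    Continuous (extremumSeekingField h s δ).uncurry := by
  unfold extremumSeekingField Function.uncurry
  fun_prop

theorem IsDither.netDrift_neg_of_strictMonoOn (hs : IsDither s T) (hh : Continuous h)
    (hδ : 0 < δ) {S : Set ℝ} (hmono : StrictMonoOn h S) {y : ℝ} (hy : Icc (y - δ) (y + δ) ⊆ S) :
    netDrift (extremumSeekingField h s δ) T y < 0 := by
  have hsc := hs.continuous
  have hyS : y ∈ S := hy ⟨by linarith, by linarith⟩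
  have hmem (t : ℝ) : y + δ * s t ∈ S := by
    obtain ⟨hlo, hhi⟩ := abs_le.1 (hs.abs_le_one t)
    exact hy ⟨by nlinarith, by nlinarith⟩
  have hpos (t : ℝ) (ht : s t ≠ 0) : 0 < (h (y + δ * s t) - h y) * s t := by
    have hprod := sub_mul_sub_pos_of_strictMonoOn hmono hyS (hmem t)
      (by simpa using And.intro hδ.ne' ht)
    rw [add_sub_cancel_left, mul_left_comm] at hprod
    exact pos_of_mul_pos_right hprod hδ.le
  have hnonneg (t : ℝ) : 0 ≤ (h (y + δ * s t) - h y) * s t := by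
    by_cases ht : s t = 0
    · simp [ht]
    · exact (hpos t ht).le
  obtain ⟨t₁, ht₁⟩ := Function.ne_iff.1 hs.ne_zero
  obtain ⟨t₀, ht₀, hst⟩ := hs.periodic.exists_mem_Ico₀ hs.period_pos t₁
  have hint : 0 < ∫ t in (0 : ℝ)..T, (h (y + δ * s t) - h y) * s t :=
    intervalIntegral.integral_pos hs.period_pos (by fun_prop) (fun t _ ↦ hnonneg t)
      ⟨t₀, Ico_subset_Icc_self ht₀, hpos t₀ (hst ▸ ht₁)⟩
  have hcenter : ∫ t in (0 : ℝ)..T, (h (y + δ * s t) - h y) * s t =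
      ∫ t in (0 : ℝ)..T, h (y + δ * s t) * s t := by
    simp_rw [sub_mul]
    rw [intervalIntegral.integral_sub (Continuous.intervalIntegrable (by fun_prop) _ _)
      (Continuous.intervalIntegrable (by fun_prop) _ _), intervalIntegral.integral_const_mul,
      hs.integral_eq_zero, mul_zero, sub_zero]
  simpa only [netDrift, extremumSeekingField, intervalIntegral.integral_neg, neg_lt_zero,
    ← hcenter] using hint

theorem IsDither.netDrift_pos_of_strictAntiOn (hs : IsDither s T) (hh : Continuous h)
    (hδ : 0 < δ) {S : Set ℝ} (hanti : StrictAntiOn h S) {y : ℝ} (hy : Icc (y - δ) (y + δ) ⊆ S) :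
    0 < netDrift (extremumSeekingField h s δ) T y := by
  simpa [netDrift, extremumSeekingField] using
    hs.netDrift_neg_of_strictMonoOn hh.neg hδ hanti.neg hy

theorem basic_es_semiglobal_practical_general (hs : IsDither s T) (hh : Continuous h) {p : ℝ}
    (hanti : StrictAntiOn h (Iic p)) (hmono : StrictMonoOn h (Ici p)) {r₀ d : ℝ}
    (hr₀ : 0 ≤ r₀) (hδ : 0 < δ) (hd : 0 < d) :
    ∃ τ γ₀ : ℝ, 0 < τ ∧ 0 < γ₀ ∧ ∀ γ ∈ Ioo 0 γ₀, ∀ x : ℝ → ℝ,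
      IsIntegralCurveOn x (fun t y ↦ -γ * h (y + δ * s t) * s t) (Ici 0) → |x 0 - p| ≤ r₀ →
        (∀ t, 0 ≤ t → |x t - p| ≤ max r₀ δ + d) ∧ ∀ t, τ / γ ≤ t → |x t - p| ≤ δ + d := by
  have hfield (γ : ℝ) : (fun t y ↦ -γ * h (y + δ * s t) * s t) =
      fun t y ↦ γ • extremumSeekingField h s δ t y := by
    ext t y
    rw [extremumSeekingField, smul_eq_mul]
    ring
  simp_rw [hfield]
  refine exists_practical_convergence_of_netDrift
    (continuous_uncurry_extremumSeekingField hh hs.continuous δ) hs.period_pos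
    (fun t ↦ ?_) (fun y hy ↦ ?_) (fun y hy ↦ ?_) hr₀ hd
  · ext y
    simp only [extremumSeekingField, hs.periodic t]
  · exact hs.netDrift_pos_of_strictAntiOn hh hδ hanti fun z hz ↦ by
      rw [mem_Iic]; linarith [hz.2]
  · exact hs.netDrift_neg_of_strictMonoOn hh hδ hmono fun z hz ↦ by
      rw [mem_Ici]; linarith [hz.1]

end ExtremumSeeking

/-- STATEMENT 15 (Proposition 1, semiglobal practical form) for the basic extremum-seeking
scheme `ẋ = -γ h(x + δ sin(2πt)) sin(2πt)`. -/
theorem basic_es_semiglobal_practical (h : ℝ → ℝ) (hsmooth : ContDiff ℝ (⊤ : ℕ∞) h)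
    (xstar : ℝ) (hmin : ∀ x : ℝ, x ≠ xstar → h xstar < h x)
    (α : ℝ → ℝ) (hα_cont : ContinuousOn α (Set.Ici 0))
    (hα_mono : StrictMonoOn α (Set.Ici 0)) (hα0 : α 0 = 0)
    (hα_top : Tendsto α atTop atTop)
    (hlb : ∀ x₁ x₂ : ℝ, (x₁ - xstar) * (x₂ - xstar) ≥ 0 → α |x₂ - x₁| ≤ |h x₂ - h x₁|)
    (r₀ δ d : ℝ) (hr₀ : 0 < r₀) (hδ : 0 < δ) (hd : 0 < d) :
    ∃ tbar γstar : ℝ, 0 < tbar ∧ 0 < γstar ∧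
      ∀ γ : ℝ, γ ∈ Set.Ioo 0 γstar →
        ∀ x₀ : ℝ, |x₀ - xstar| ≤ r₀ →
          ∀ x : ℝ → ℝ, Differentiable ℝ x → x 0 = x₀ →
            (∀ t : ℝ, 0 ≤ t →
              HasDerivAt x
                (-γ * h (x t + δ * Real.sin (2 * Real.pi * t)) * Real.sin (2 * Real.pi * t)) t) →
            (∃ M : ℝ, ∀ t : ℝ, 0 ≤ t → |x t| ≤ M) ∧
            (∀ t : ℝ, tbar / γ ≤ t → |x t - xstar| ≤ δ + d) := by
  have hmin_le (x : ℝ) : h xstar ≤ h x := by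
    rcases eq_or_ne x xstar with rfl | hx
    exacts [le_rfl, (hmin x hx).le]
  obtain ⟨hanti, hmono⟩ := strictAntiOn_Iic_and_strictMonoOn_Ici_of_forall_le_abs_sub
    hsmooth.continuous hmin_le (fun u hu ↦ hα0 ▸ hα_mono Set.self_mem_Ici hu.le hu) hlb
  obtain ⟨τ, γ₀, hτ, hγ₀, hconv⟩ := basic_es_semiglobal_practical_general
    isDither_sin_two_pi_mul hsmooth.continuous hanti hmono hr₀.le hδ hd
  refine ⟨τ, γ₀, hτ, hγ₀, fun γ hγ x₀ hx₀ x _ hx0 hx ↦ ?_⟩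
  obtain ⟨hbdd, hlate⟩ := hconv γ hγ x (fun t ht ↦ (hx t ht).hasDerivWithinAt) (hx0 ▸ hx₀)
  refine ⟨⟨max r₀ δ + d + |xstar|, fun t ht ↦ ?_⟩, hlate⟩
  linarith [abs_sub_abs_le_abs_sub (x t) xstar, hbdd t ht]
end

section
/- (Theorem 1, semiglobal practical form for the HPF-ES scheme) For every r₀ > 0, δ > 0 and d > 0 there exist t̄ > 0 and γ* > 0 such that for every γ ∈ (0, γ*) and every initial condition (x₀, ȳ₀) with |x₀ − x*| ≤ r₀ and |ȳ₀ − a₀δ(x₀)/2| ≤ γ*, every solution (x, ȳ) : [0,∞) → ℝ × ℝ of the high-pass-filter extremum-seeking system ẋ(t) = −γ·(h(x(t) + δ sin(2πt)) − ȳ(t))·sin(2πt), ẏ̄(t) = γ·(h(x(t) + δ sin(2πt)) − ȳ(t)), with (x(0), ȳ(0)) = (x₀, ȳ₀), is bounded and satisfies |x(t) − x*| ≤ δ + d for all t ≥ t̄/γ. -/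
open Real MeasureTheory intervalIntegral Filter

/-- Zeroth Fourier coefficient of `t ↦ h (x + δ sin (2π t))`. -/
noncomputable def a0 (h : ℝ → ℝ) (δ x : ℝ) : ℝ :=
  2 * ∫ t in (0:ℝ)..1, h (x + δ * Real.sin (2 * Real.pi * t))

/-!
Over one period of the dither the state moves by `O(γ)`, so `x` changes by `-γ` times the average
drift `D u = ∫₀¹ h (u + δ s t) s t dt` at its starting value, up to an error `o(γ)`; the slow
variable `ȳ` drops out of this average because the dither has mean zero. If `|u - x*| ≥ δ`, the
probing interval `[u - δ, u + δ]` lies on one side of `x*`, where `h` is strictly monotone, so `D u`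
points away from `x*`. By compactness `|D|` has a positive lower bound on each annulus
`δ ≤ |u - x*| ≤ ρ`, hence the distance to `x*`, sampled once per period, decreases by at least a
fixed multiple of `γ` until it is below `δ` plus the `O(γ)` motion within a period. Meanwhile `ȳ`
cannot leave an interval that contains all measured values of `h`, since it filters them.
-/

namespace HPFES

open Set

section Calculus

lemma norm_sub_le_of_norm_deriv_right_lt {E : Type*} [NormedAddCommGroup E] [NormedSpace ℝ E]
    {f f' : ℝ → E} {a b C : ℝ} (hf : ContinuousOn f (Icc a b))
    (hf' : ∀ t ∈ Ico a b, HasDerivWithinAt f (f' t) (Ici t) t)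
    (bound : ∀ t ∈ Ico a b, ‖f t - f a‖ = C * (t - a) → ‖f' t‖ < C) :
    ∀ t ∈ Icc a b, ‖f t - f a‖ ≤ C * (t - a) :=
  image_norm_le_of_norm_deriv_right_lt_deriv_boundary (f := fun t ↦ f t - f a) (B' := fun _ ↦ C)
    (hf.sub continuousOn_const) (fun t ht ↦ (hf' t ht).sub_const _) (by simp)
    (fun t ↦ by simpa using ((hasDerivAt_id t).sub_const a).const_mul C) bound

lemma abs_le_of_hasDerivWithinAt_lowPass {y w : ℝ → ℝ} {a b γ Y : ℝ} (hγ : 0 < γ)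
    (hy : ContinuousOn y (Icc a b))
    (hy' : ∀ t ∈ Ico a b, HasDerivWithinAt y (γ * (w t - y t)) (Ici t) t)
    (hw : ∀ t ∈ Ico a b, |w t| < Y) (ha : |y a| ≤ Y) :
    ∀ t ∈ Icc a b, |y t| ≤ Y := by
  have hY : |Y| = Y := abs_of_nonneg ((abs_nonneg _).trans ha)
  suffices hsq : ∀ t ∈ Icc a b, y t * y t ≤ Y * Y from fun t ht ↦
    (abs_le_iff_mul_self_le.2 (hsq t ht)).trans_eq hY
  refine image_le_of_deriv_right_lt_deriv_boundary (f := fun t ↦ y t * y t) (hy.mul hy)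
    (fun t ht ↦ (hy' t ht).mul (hy' t ht)) (abs_le_iff_mul_self_le.1 (hY.symm ▸ ha))
    (fun t ↦ hasDerivAt_const t (Y * Y)) ?_
  intro t ht hboundary
  have habs : |y t| = Y := (abs_eq_iff_mul_self_eq.2 hboundary).trans hY
  have hpos : 0 < Y := (abs_nonneg _).trans_lt (hw t ht)
  have hprod : y t * w t < y t * y t := calc
    y t * w t ≤ |y t| * |w t| := (le_abs_self _).trans_eq (abs_mul _ _)
    _ < Y * Y := by simpa only [habs] using mul_lt_mul_of_pos_left (hw t ht) hpos
    _ = y t * y t := hboundary.symm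
  have := mul_pos hγ (sub_pos.2 hprod)
  linarith

end Calculus

section Order

variable {X Y : Type*} [ConditionallyCompleteLinearOrder X] [DenselyOrdered X]
  [TopologicalSpace X] [OrderTopology X] [LinearOrder Y] [TopologicalSpace Y]
  [OrderClosedTopology Y] {f : X → Y} {a : X}

lemma strictMonoOn_Ici_of_injOn (hf : ContinuousOn f (Ici a)) (hinj : InjOn f (Ici a))
    (hmin : IsMinOn f (Ici a) a) : StrictMonoOn f (Ici a) := by
  intro u hu v hv huv
  exact (hf.mono Icc_subset_Ici_self).strictMonoOn_of_injOn_Icc hv (hmin hv)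
    (hinj.mono Icc_subset_Ici_self) ⟨hu, huv.le⟩ ⟨hv, le_rfl⟩ huv

lemma strictAntiOn_Iic_of_injOn (hf : ContinuousOn f (Iic a)) (hinj : InjOn f (Iic a))
    (hmin : IsMinOn f (Iic a) a) : StrictAntiOn f (Iic a) := by
  intro u hu v hv huv
  exact (hf.mono Icc_subset_Iic_self).strictAntiOn_of_injOn_Icc hu (hmin hu)
    (hinj.mono Icc_subset_Iic_self) ⟨le_rfl, hu⟩ ⟨huv.le, hv⟩ huv

end Order

lemma injOn_of_le_dist {X Y : Type*} [MetricSpace X] [PseudoMetricSpace Y] {f : X → Y}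
    {α : ℝ → ℝ} {S : Set X} (hα : ∀ r, 0 < r → 0 < α r)
    (hf : ∀ u ∈ S, ∀ v ∈ S, α (dist u v) ≤ dist (f u) (f v)) : InjOn f S := by
  intro u hu v hv huv
  by_contra hne
  have hpos : 0 < dist (f u) (f v) := (hα _ (dist_pos.2 hne)).trans_le (hf u hu v hv)
  exact hpos.ne' (huv ▸ dist_self _)

section OrderedField

variable {𝕜 : Type*} [Field 𝕜] [LinearOrder 𝕜] [IsStrictOrderedRing 𝕜]

lemma abs_le_abs_sub_add_of_abs_sub_le {e e' v ε : 𝕜} (hsign : 0 < e * v)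
    (hstep : |e' - e| ≤ |e|) (herr : |e' - e + v| ≤ ε) : |e'| ≤ |e| - |v| + ε := by
  rw [abs_le] at hstep herr
  rcases pos_and_pos_or_neg_and_neg_of_mul_pos hsign with ⟨he, hv⟩ | ⟨he, hv⟩
  · rw [abs_of_pos he] at hstep ⊢
    rw [abs_of_pos hv, abs_of_nonneg] <;> linarith
  · rw [abs_of_neg he] at hstep ⊢
    rw [abs_of_neg hv, abs_of_nonpos] <;> linarith

lemma le_max_sub_mul_of_le_max_sub {e : ℕ → 𝕜} {κ b : 𝕜} (hκ : 0 ≤ κ)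
    (he : ∀ n, e (n + 1) ≤ max (e n - κ) b) (n : ℕ) : e n ≤ max (e 0 - n * κ) b := by
  induction n with
  | zero => simp
  | succ n ih =>
    refine (he n).trans (max_le ?_ (le_max_right _ _))
    rw [sub_le_iff_le_add, ← max_add_add_right]
    refine ih.trans (max_le_max ?_ (le_add_of_nonneg_right hκ))
    push_cast
    linarith

end OrderedField

/-- A normalised dither (probing signal): continuous, of period `1`, with zero mean over a period,
bounded by `1` and not identically zero. The scheme of the paper uses `t ↦ sin (2π t)`. -/
structure IsDither (s : ℝ → ℝ) : Prop where
  continuous : Continuous s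
  periodic : Function.Periodic s 1
  integral_eq_zero : ∫ t in (0 : ℝ)..1, s t = 0
  abs_le_one : ∀ t, |s t| ≤ 1
  exists_ne_zero : ∃ t, s t ≠ 0

/-- The average over one period of `h (u + δ s t) s t`: the averaged scheme is
`u̇ = -γ · meanDrift h s δ u`. -/
noncomputable def meanDrift (h s : ℝ → ℝ) (δ u : ℝ) : ℝ :=
  ∫ t in (0 : ℝ)..1, h (u + δ * s t) * s t

/-- `(x, y)` solves the high-pass-filter extremum-seeking system with objective `h`, dither `s`,
amplitude `δ` and gain `γ` on `[0, ∞)`; the derivative at `0` is one-sided. -/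
structure IsSolution (h s : ℝ → ℝ) (δ γ : ℝ) (x y : ℝ → ℝ) : Prop where
  hasDerivWithinAt_fst : ∀ t, 0 ≤ t →
    HasDerivWithinAt x (-γ * (h (x t + δ * s t) - y t) * s t) (Ici 0) t
  hasDerivWithinAt_snd : ∀ t, 0 ≤ t →
    HasDerivWithinAt y (γ * (h (x t + δ * s t) - y t)) (Ici 0) t

variable {h s x y : ℝ → ℝ} {xstar δ γ a : ℝ}

lemma isDither_sin : IsDither fun t ↦ sin (2 * π * t) where
  continuous := by fun_prop
  periodic t := by
    dsimp only
    rw [mul_add, mul_one, sin_add_two_pi]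
  integral_eq_zero := by
    simp [integral_comp_mul_left (fun t ↦ sin t) two_pi_pos.ne']
  abs_le_one t := abs_sin_le_one _
  exists_ne_zero := ⟨1 / 4, by rw [show 2 * π * (1 / 4) = π / 2 by ring, sin_pi_div_two]; simp⟩

lemma exists_abs_le_of_abs_sub_a0_le (hh : Continuous h) (δ c r ε : ℝ) :
    ∃ C, ∀ u v, |u - c| ≤ r → |v - a0 h δ u / 2| ≤ ε → |v| ≤ C := by
  have hcont : Continuous fun u ↦ a0 h δ u / 2 := by
    unfold a0
    exact (continuous_const.mul
      (continuous_parametric_intervalIntegral_of_continuous' (by fun_prop) 0 1)).div_const 2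
  obtain ⟨C, hC⟩ := (isCompact_closedBall c r).exists_bound_of_continuousOn hcont.continuousOn
  refine ⟨C + ε, fun u v hu hv ↦ ?_⟩
  calc |v| ≤ |a0 h δ u / 2| + |v - a0 h δ u / 2| := by
        simpa using abs_add_le (a0 h δ u / 2) (v - a0 h δ u / 2)
    _ ≤ C + ε := add_le_add (hC u hu) hv

lemma strictAntiOn_Iic_and_strictMonoOn_Ici (hh : Continuous h) (hmin : ∀ x, h xstar ≤ h x)
    {α : ℝ → ℝ} (hα : ∀ r, 0 < r → 0 < α r)
    (hlb : ∀ u v, 0 ≤ (u - xstar) * (v - xstar) → α |v - u| ≤ |h v - h u|) :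
    StrictAntiOn h (Iic xstar) ∧ StrictMonoOn h (Ici xstar) := by
  have hinj : ∀ S : Set ℝ, (∀ u ∈ S, ∀ v ∈ S, 0 ≤ (u - xstar) * (v - xstar)) → InjOn h S :=
    fun S hS ↦ injOn_of_le_dist hα fun u hu v hv ↦ by
      simpa only [Real.dist_eq, abs_sub_comm] using hlb u v (hS u hu v hv)
  exact ⟨strictAntiOn_Iic_of_injOn hh.continuousOn (hinj _ fun u hu v hv ↦
      mul_nonneg_of_nonpos_of_nonpos (sub_nonpos.2 hu) (sub_nonpos.2 hv)) fun x _ ↦ hmin x,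
    strictMonoOn_Ici_of_injOn hh.continuousOn (hinj _ fun u hu v hv ↦
      mul_nonneg (sub_nonneg.2 hu) (sub_nonneg.2 hv)) fun x _ ↦ hmin x⟩

section MeanDrift

lemma IsDither.abs_mul_le (hs : IsDither s) (hδ : 0 ≤ δ) (t : ℝ) : |δ * s t| ≤ δ := by
  rw [abs_mul, abs_of_nonneg hδ]
  exact mul_le_of_le_one_right hδ (hs.abs_le_one t)

lemma IsDither.abs_add_mul_sub_le (hs : IsDither s) (hδ : 0 ≤ δ) (u v t : ℝ) :
    |u + δ * s t - v| ≤ |u - v| + δ := by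
  rw [add_sub_right_comm]
  exact (abs_add_le _ _).trans (add_le_add_right (hs.abs_mul_le hδ t) _)

lemma continuous_meanDrift (hh : Continuous h) (hs : IsDither s) (δ : ℝ) :
    Continuous (meanDrift h s δ) := by
  have hsc := hs.continuous
  exact continuous_parametric_intervalIntegral_of_continuous' (by fun_prop) 0 1

lemma meanDrift_neg : meanDrift (fun u ↦ -h u) s δ = fun u ↦ -meanDrift h s δ u := by
  funext u
  simp only [meanDrift, neg_mul, intervalIntegral.integral_neg]

lemma integral_sub_const_mul_dither (hh : Continuous h) (hs : IsDither s) (δ u v a : ℝ) :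
    ∫ t in a..a + 1, (h (u + δ * s t) - v) * s t = meanDrift h s δ u := by
  have hsc := hs.continuous
  have hper : Function.Periodic (fun t ↦ (h (u + δ * s t) - v) * s t) 1 := fun t ↦ by
    simp only [hs.periodic t]
  rw [hper.intervalIntegral_add_eq a 0, zero_add]
  simp only [sub_mul]
  rw [intervalIntegral.integral_sub (Continuous.intervalIntegrable (by fun_prop) _ _)
    (Continuous.intervalIntegrable (by fun_prop) _ _), intervalIntegral.integral_const_mul,
    hs.integral_eq_zero, mul_zero, sub_zero, meanDrift]

lemma meanDrift_pos (hh : Continuous h) (hs : IsDither s) (hδ : 0 < δ) {u : ℝ}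
    (hmono : StrictMonoOn h (Icc (u - δ) (u + δ))) : 0 < meanDrift h s δ u := by
  have hsc := hs.continuous
  have hu : u ∈ Icc (u - δ) (u + δ) := ⟨by linarith, by linarith⟩
  have hmem : ∀ t, u + δ * s t ∈ Icc (u - δ) (u + δ) := fun t ↦ by
    have := abs_le.1 (hs.abs_mul_le hδ.le t)
    constructor <;> linarith
  have hpos : ∀ t, s t ≠ 0 → 0 < (h (u + δ * s t) - h u) * s t := by
    intro t ht
    rcases ht.lt_or_gt with hneg | hpos
    · exact mul_pos_of_neg_of_neg (sub_neg.2 <| hmono (hmem t) hu <| by nlinarith) hneg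
    · exact mul_pos (sub_pos.2 <| hmono hu (hmem t) <| by nlinarith) hpos
  obtain ⟨t₀, ht₀⟩ := hs.exists_ne_zero
  obtain ⟨t₁, ht₁, heq⟩ := hs.periodic.exists_mem_Ico₀ one_pos t₀
  rw [← integral_sub_const_mul_dither hh hs δ u (h u) 0, zero_add]
  refine intervalIntegral.integral_pos one_pos (by fun_prop) (fun t _ ↦ ?_)
    ⟨t₁, Ico_subset_Icc_self ht₁, hpos t₁ (heq ▸ ht₀)⟩
  by_cases ht : s t = 0
  · simp [ht]
  · exact (hpos t ht).le

lemma mul_meanDrift_pos (hh : Continuous h) (hanti : StrictAntiOn h (Iic xstar))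
    (hmono : StrictMonoOn h (Ici xstar)) (hs : IsDither s) (hδ : 0 < δ) {u : ℝ}
    (hu : δ ≤ |u - xstar|) : 0 < (u - xstar) * meanDrift h s δ u := by
  rcases le_abs.1 hu with hright | hleft
  · refine mul_pos (hδ.trans_le hright) (meanDrift_pos hh hs hδ (hmono.mono fun v hv ↦ ?_))
    exact mem_Ici.2 (by linarith [hv.1])
  · have hneg : 0 < meanDrift (fun v ↦ -h v) s δ u :=
      meanDrift_pos hh.neg hs hδ <| StrictAntiOn.neg <| hanti.mono fun v hv ↦
        mem_Iic.2 (by linarith [hv.2])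
    rw [meanDrift_neg] at hneg
    exact mul_pos_of_neg_of_neg (by linarith) (neg_pos.1 hneg)

lemma exists_le_abs_meanDrift (hh : Continuous h) (hanti : StrictAntiOn h (Iic xstar))
    (hmono : StrictMonoOn h (Ici xstar)) (hs : IsDither s) (hδ : 0 < δ) (ρ : ℝ) :
    ∃ c > 0, ∀ u, δ ≤ |u - xstar| → |u - xstar| ≤ ρ → c ≤ |meanDrift h s δ u| := by
  have hcompact : IsCompact (Metric.closedBall xstar ρ ∩ {u | δ ≤ |u - xstar|}) :=
    (isCompact_closedBall xstar ρ).inter_right (isClosed_le (by fun_prop) (by fun_prop))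
  obtain ⟨c, hc, hle⟩ := hcompact.exists_forall_le' (a := 0)
    (continuous_meanDrift hh hs δ).abs.continuousOn fun u hu ↦
      abs_pos.2 (right_ne_zero_of_mul (mul_meanDrift_pos hh hanti hmono hs hδ hu.2).ne')
  exact ⟨c, hc, fun u hδu huρ ↦ hle u ⟨huρ, hδu⟩⟩

end MeanDrift

namespace IsSolution

lemma hasDerivWithinAt_fst_Ici (hsol : IsSolution h s δ γ x y) {t : ℝ} (ht : 0 ≤ t) :
    HasDerivWithinAt x (-γ * (h (x t + δ * s t) - y t) * s t) (Ici t) t :=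
  (hsol.hasDerivWithinAt_fst t ht).mono (Ici_subset_Ici.2 ht)

lemma hasDerivWithinAt_snd_Ici (hsol : IsSolution h s δ γ x y) {t : ℝ} (ht : 0 ≤ t) :
    HasDerivWithinAt y (γ * (h (x t + δ * s t) - y t)) (Ici t) t :=
  (hsol.hasDerivWithinAt_snd t ht).mono (Ici_subset_Ici.2 ht)

lemma continuousOn_fst (hsol : IsSolution h s δ γ x y) (ha : 0 ≤ a) (b : ℝ) :
    ContinuousOn x (Icc a b) := fun t ht ↦
  (hsol.hasDerivWithinAt_fst t (ha.trans ht.1)).continuousWithinAt.mono fun _ hu ↦ ha.trans hu.1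

lemma continuousOn_snd (hsol : IsSolution h s δ γ x y) (ha : 0 ≤ a) (b : ℝ) :
    ContinuousOn y (Icc a b) := fun t ht ↦
  (hsol.hasDerivWithinAt_snd t (ha.trans ht.1)).continuousWithinAt.mono fun _ hu ↦ ha.trans hu.1

lemma norm_sub_le_of_abs_le (hsol : IsSolution h s δ γ x y) (hs : IsDither s) (hδ : 0 ≤ δ)
    (hγ : 0 < γ) (ha : 0 ≤ a) {H K : ℝ} (hH : ∀ u, |u - x a| ≤ 1 + δ → |h u| ≤ H)
    (hK : H + |y a| + 1 < K) (hγK : γ * K ≤ 1) :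
    ∀ t ∈ Icc a (a + 1), ‖(x t, y t) - (x a, y a)‖ ≤ γ * K := by
  have hKpos : 0 < K := by
    have := (abs_nonneg _).trans (hH (x a) (by simpa using by linarith))
    linarith [abs_nonneg (y a)]
  have hmul_le : ∀ t ≤ a + 1, γ * K * (t - a) ≤ γ * K := fun t ht ↦
    mul_le_of_le_one_right (by positivity) (by linarith)
  intro t ht
  refine (norm_sub_le_of_norm_deriv_right_lt (f := fun t ↦ (x t, y t)) (C := γ * K)
    ((hsol.continuousOn_fst ha _).prodMk (hsol.continuousOn_snd ha _))
    (fun t ht ↦ (hsol.hasDerivWithinAt_fst_Ici (ha.trans ht.1)).prodMk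
      (hsol.hasDerivWithinAt_snd_Ici (ha.trans ht.1))) ?_ t ht).trans (hmul_le t ht.2)
  intro t ht heq
  have hnear : ‖(x t, y t) - (x a, y a)‖ ≤ 1 := heq.le.trans ((hmul_le t ht.2.le).trans hγK)
  have hx : |x t - x a| ≤ 1 := (norm_fst_le _).trans hnear
  have hy : |y t - y a| ≤ 1 := (norm_snd_le _).trans hnear
  have hmeas : |h (x t + δ * s t)| ≤ H :=
    hH _ <| (hs.abs_add_mul_sub_le hδ _ _ t).trans (add_le_add_left hx δ)
  have hspeed : |γ * (h (x t + δ * s t) - y t)| < γ * K := by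
    rw [abs_mul, abs_of_pos hγ]
    refine mul_lt_mul_of_pos_left ?_ hγ
    calc |h (x t + δ * s t) - y t| ≤ |h (x t + δ * s t)| + |y t| := abs_sub _ _
      _ ≤ H + (|y t - y a| + |y a|) :=
        add_le_add hmeas (by simpa using abs_add_le (y t - y a) (y a))
      _ < K := by linarith
  refine max_lt ((?_ : _ ≤ _).trans_lt hspeed) hspeed
  rw [Real.norm_eq_abs, abs_mul, neg_mul, abs_neg]
  exact mul_le_of_le_one_right (abs_nonneg _) (hs.abs_le_one t)

lemma abs_sub_add_meanDrift_le (hsol : IsSolution h s δ γ x y) (hh : Continuous h)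
    (hs : IsDither s) (hγ : 0 ≤ γ) (ha : 0 ≤ a) {ε : ℝ}
    (hε : ∀ t ∈ Icc a (a + 1), |h (x t + δ * s t) - h (x a + δ * s t)| + |y t - y a| ≤ ε) :
    |x (a + 1) - x a + γ * meanDrift h s δ (x a)| ≤ γ * ε := by
  have hsc := hs.continuous
  set g : ℝ → ℝ := fun t ↦ (h (x a + δ * s t) - y a) * s t with hg
  have hgc : Continuous g := by fun_prop
  have hG : ∀ t, HasDerivAt (fun t ↦ γ * ∫ τ in a..t, g τ) (γ * g t) t := fun t ↦
    (hgc.integral_hasStrictDerivAt a t).hasDerivAt.const_mul γ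
  have hmvt := norm_image_sub_le_of_norm_deriv_right_le_segment (C := γ * ε) (b := a + 1)
    ((hsol.continuousOn_fst ha _).add fun t _ ↦ (hG t).continuousAt.continuousWithinAt)
    (fun t ht ↦ (hsol.hasDerivWithinAt_fst_Ici (ha.trans ht.1)).add (hG t).hasDerivWithinAt)
    (fun t ht ↦ ?_) (a + 1) (right_mem_Icc.2 (by linarith))
  · rw [← integral_sub_const_mul_dither hh hs δ (x a) (y a) a]
    simpa [hg, add_sub_right_comm] using hmvt
  calc ‖-γ * (h (x t + δ * s t) - y t) * s t + γ * g t‖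
      = γ * (|(y t - y a) - (h (x t + δ * s t) - h (x a + δ * s t))| * |s t|) := by
        rw [← abs_mul, ← abs_of_nonneg hγ, ← abs_mul, abs_of_nonneg hγ, Real.norm_eq_abs, hg]
        ring_nf
    _ ≤ γ * ε := by
        refine mul_le_mul_of_nonneg_left ?_ hγ
        refine (mul_le_of_le_one_right (abs_nonneg _) (hs.abs_le_one t)).trans ?_
        refine (abs_sub _ _).trans ?_
        rw [add_comm]
        exact hε t (Ico_subset_Icc_self ht)

lemma abs_snd_le (hsol : IsSolution h s δ γ x y) (hγ : 0 < γ) (ha : 0 ≤ a) {b Y : ℝ}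
    (hw : ∀ t ∈ Ico a b, |h (x t + δ * s t)| < Y) (hya : |y a| ≤ Y) :
    ∀ t ∈ Icc a b, |y t| ≤ Y :=
  abs_le_of_hasDerivWithinAt_lowPass hγ (hsol.continuousOn_snd ha b)
    (fun _ ht ↦ hsol.hasDerivWithinAt_snd_Ici (ha.trans ht.1)) hw hya

lemma abs_sub_le_max_of_period (hsol : IsSolution h s δ γ x y) (hh : Continuous h)
    (hanti : StrictAntiOn h (Iic xstar)) (hmono : StrictMonoOn h (Ici xstar))
    (hs : IsDither s) (hδ : 0 < δ) (hγ : 0 < γ) (ha : 0 ≤ a) {c η : ℝ} (hηδ : η ≤ δ)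
    (hc : δ ≤ |x a - xstar| → c ≤ |meanDrift h s δ (x a)|) (hη : |x (a + 1) - x a| ≤ η)
    (hc2 : ∀ t ∈ Icc a (a + 1),
      |h (x t + δ * s t) - h (x a + δ * s t)| + |y t - y a| ≤ c / 2) :
    |x (a + 1) - xstar| ≤ max (|x a - xstar| - γ * (c / 2)) (δ + η) := by
  have hshift : x (a + 1) - xstar - (x a - xstar) = x (a + 1) - x a := sub_sub_sub_cancel_right ..
  rcases le_total δ |x a - xstar| with hfar | hnear
  · refine le_max_of_le_left ?_
    have hsign : 0 < (x a - xstar) * (γ * meanDrift h s δ (x a)) := by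
      rw [mul_left_comm]
      exact mul_pos hγ (mul_meanDrift_pos hh hanti hmono hs hδ hfar)
    calc |x (a + 1) - xstar|
        ≤ |x a - xstar| - |γ * meanDrift h s δ (x a)| + γ * (c / 2) :=
          abs_le_abs_sub_add_of_abs_sub_le hsign
            (hshift ▸ hη.trans (hηδ.trans hfar))
            (hshift ▸ hsol.abs_sub_add_meanDrift_le hh hs hγ.le ha hc2)
      _ ≤ |x a - xstar| - γ * c + γ * (c / 2) := by
          rw [abs_mul, abs_of_pos hγ]
          gcongr
          exact hc hfar
      _ = |x a - xstar| - γ * (c / 2) := by ring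
  · refine le_max_of_le_right ?_
    calc |x (a + 1) - xstar| ≤ |x (a + 1) - x a| + |x a - xstar| := abs_sub_le _ _ _
      _ ≤ δ + η := by linarith

end IsSolution

/-- What one dither period `[a, a + 1]` does to `(x, y)`: `x` moves by at most `η`, `|y|` stays
below `Y`, and the distance of `x` to `xstar` decreases by `κ` unless it ends below `δ + η`. -/
structure PeriodControl (x y : ℝ → ℝ) (xstar δ η Y κ a : ℝ) : Prop where
  abs_fst_sub_le : ∀ t ∈ Icc a (a + 1), |x t - x a| ≤ η
  abs_snd_le : ∀ t ∈ Icc a (a + 1), |y t| ≤ Y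
  abs_sub_le_max : |x (a + 1) - xstar| ≤ max (|x a - xstar| - κ) (δ + η)

theorem exists_periodControl (hh : Continuous h) (hanti : StrictAntiOn h (Iic xstar))
    (hmono : StrictMonoOn h (Ici xstar)) (hs : IsDither s) (hδ : 0 < δ) {η : ℝ} (hη : 0 < η)
    (hηδ : η ≤ δ) (ρ r₁ : ℝ) :
    ∃ Y κ γstar : ℝ, r₁ ≤ Y ∧ 0 < κ ∧ 0 < γstar ∧ ∀ γ ∈ Ioo 0 γstar, ∀ x y,
      IsSolution h s δ γ x y → ∀ a, 0 ≤ a → |x a - xstar| ≤ ρ → |y a| ≤ Y →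
        PeriodControl x y xstar δ η Y (γ * κ) a := by
  have hball := isCompact_closedBall xstar (ρ + 1 + δ)
  obtain ⟨c, hc, hdrift⟩ := exists_le_abs_meanDrift hh hanti hmono hs hδ ρ
  obtain ⟨H, hH⟩ := hball.exists_bound_of_continuousOn hh.continuousOn
  obtain ⟨ω, hω, hunif⟩ := Metric.uniformContinuousOn_iff_le.1
    (hball.uniformContinuousOn_of_continuous hh.continuousOn) (c / 4) (by positivity)
  set Y := max r₁ (|H| + 1)
  have hHY : |H| + 1 ≤ Y := le_max_right _ _
  set K := |H| + Y + 2
  have hKpos : 0 < K := by positivity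
  refine ⟨Y, c / 2, min (min 1 η) (min ω (c / 4)) / K, le_max_left _ _, by positivity,
    by positivity, ?_⟩
  rintro γ ⟨hγ, hγlt⟩ x y hsol a ha hxa hya
  rw [lt_div_iff₀ hKpos, lt_min_iff, lt_min_iff, lt_min_iff] at hγlt
  obtain ⟨⟨hγ1, hγη⟩, hγω, hγc⟩ := hγlt
  have hmem : ∀ u t, |u - x a| ≤ 1 → u + δ * s t ∈ Metric.closedBall xstar (ρ + 1 + δ) :=
    fun u t hu ↦ (hs.abs_add_mul_sub_le hδ.le u xstar t).trans (by
      linarith [abs_sub_le u (x a) xstar])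
  have hmove : ∀ t ∈ Icc a (a + 1), ‖(x t, y t) - (x a, y a)‖ ≤ γ * K :=
    hsol.norm_sub_le_of_abs_le hs hδ.le hγ ha
      (fun u hu ↦ (hH u ((dist_triangle u (x a) xstar).trans (by
        rw [Real.dist_eq, Real.dist_eq]; linarith))).trans (le_abs_self H))
      (by linarith) hγ1.le
  have hx : ∀ t ∈ Icc a (a + 1), |x t - x a| ≤ γ * K := fun t ht ↦
    (norm_fst_le _).trans (hmove t ht)
  have hy : ∀ t ∈ Icc a (a + 1), |y t - y a| ≤ γ * K := fun t ht ↦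
    (norm_snd_le _).trans (hmove t ht)
  refine ⟨fun t ht ↦ (hx t ht).trans hγη.le, hsol.abs_snd_le hγ ha (fun t ht ↦ ?_) hya,
    hsol.abs_sub_le_max_of_period hh hanti hmono hs hδ hγ ha hηδ (hdrift _ · hxa)
      ((hx _ (right_mem_Icc.2 (by linarith))).trans hγη.le) (fun t ht ↦ ?_)⟩
  · have := hH _ (hmem (x t) t ((hx t (Ico_subset_Icc_self ht)).trans hγ1.le))
    rw [Real.norm_eq_abs] at this
    linarith [le_abs_self H]
  · have := hunif _ (hmem (x t) t ((hx t ht).trans hγ1.le)) _ (hmem (x a) t (by simp))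
      (by rw [dist_add_right]; exact (hx t ht).trans hγω.le)
    rw [Real.dist_eq] at this
    linarith [hy t ht]

section Iteration

variable {η ρ Y κ : ℝ}

lemma abs_le_of_periodControl_natCast (hκ : 0 ≤ κ) (hρ : δ + η ≤ ρ) (hx₀ : |x 0 - xstar| ≤ ρ)
    (hy₀ : |y 0| ≤ Y)
    (hperiod : ∀ a, 0 ≤ a → |x a - xstar| ≤ ρ → |y a| ≤ Y →
      PeriodControl x y xstar δ η Y κ a) (n : ℕ) :
    |x n - xstar| ≤ ρ ∧ |y n| ≤ Y := by
  induction n with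
  | zero => simpa using And.intro hx₀ hy₀
  | succ n ih =>
    have hn := hperiod n n.cast_nonneg ih.1 ih.2
    push_cast
    exact ⟨hn.abs_sub_le_max.trans (max_le (by linarith [ih.1]) hρ),
      hn.abs_snd_le _ (right_mem_Icc.2 (by linarith))⟩

theorem abs_le_of_periodControl (hκ : 0 ≤ κ) (hρ : δ + η ≤ ρ) (hx₀ : |x 0 - xstar| ≤ ρ)
    (hy₀ : |y 0| ≤ Y)
    (hperiod : ∀ a, 0 ≤ a → |x a - xstar| ≤ ρ → |y a| ≤ Y →
      PeriodControl x y xstar δ η Y κ a) {t : ℝ} (ht : 0 ≤ t) :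
    |x t - xstar| ≤ max (ρ - (t - 1) * κ) (δ + η) + η ∧ |y t| ≤ Y := by
  have hbox := abs_le_of_periodControl_natCast hκ hρ hx₀ hy₀ hperiod
  have hcontrol (n : ℕ) : PeriodControl x y xstar δ η Y κ n :=
    hperiod n n.cast_nonneg (hbox n).1 (hbox n).2
  have hmem : t ∈ Icc (⌊t⌋₊ : ℝ) (⌊t⌋₊ + 1) := ⟨Nat.floor_le ht, (Nat.lt_floor_add_one t).le⟩
  refine ⟨?_, (hcontrol ⌊t⌋₊).abs_snd_le t hmem⟩
  have hsample : |x ⌊t⌋₊ - xstar| ≤ max (|x (0 : ℕ) - xstar| - ⌊t⌋₊ * κ) (δ + η) :=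
    le_max_sub_mul_of_le_max_sub (e := fun n : ℕ ↦ |x n - xstar|) hκ
      (fun n ↦ by simpa using (hcontrol n).abs_sub_le_max) ⌊t⌋₊
  calc |x t - xstar| ≤ |x ⌊t⌋₊ - xstar| + |x t - x ⌊t⌋₊| := by
        rw [add_comm]; exact abs_sub_le _ _ _
    _ ≤ max (|x (0 : ℕ) - xstar| - ⌊t⌋₊ * κ) (δ + η) + η :=
        add_le_add hsample ((hcontrol ⌊t⌋₊).abs_fst_sub_le t hmem)
    _ ≤ max (ρ - (t - 1) * κ) (δ + η) + η := by
        rw [Nat.cast_zero]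
        gcongr
        linarith [hmem.2]

end Iteration

end HPFES

open HPFES

theorem hpf_es_semiglobal_practical_general {h s : ℝ → ℝ} {xstar δ d : ℝ} (hh : Continuous h)
    (hanti : StrictAntiOn h (Set.Iic xstar)) (hmono : StrictMonoOn h (Set.Ici xstar))
    (hs : IsDither s) (hδ : 0 < δ) (hd : 0 < d) (r₀ r₁ : ℝ) :
    ∃ tbar γstar : ℝ, 0 < tbar ∧ 0 < γstar ∧ ∀ γ ∈ Set.Ioo 0 γstar, ∀ x y : ℝ → ℝ,
      IsSolution h s δ γ x y → |x 0 - xstar| ≤ r₀ → |y 0| ≤ r₁ →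
        (∃ M : ℝ, ∀ t : ℝ, 0 ≤ t → |x t| ≤ M ∧ |y t| ≤ M) ∧
        (∀ t : ℝ, tbar / γ ≤ t → |x t - xstar| ≤ δ + d) := by
  set η := min (d / 2) δ
  have hη : 0 < η := by positivity
  have hηd : η ≤ d / 2 := min_le_left _ _
  set ρ := max r₀ (δ + η)
  have hρ : δ + η ≤ ρ := le_max_right _ _
  obtain ⟨Y, κ, γstar, hr₁, hκ, hγstar, hperiod⟩ :=
    exists_periodControl hh hanti hmono hs hδ hη (min_le_right _ _) ρ r₁
  refine ⟨ρ / κ + γstar, γstar, by positivity, hγstar, fun γ hγ x y hsol hx₀ hy₀ ↦ ?_⟩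
  have hpos : 0 < γ * κ := mul_pos hγ.1 hκ
  have hbound {t : ℝ} (ht : 0 ≤ t) :=
    abs_le_of_periodControl hpos.le hρ (hx₀.trans (le_max_left _ _)) (hy₀.trans hr₁)
      (hperiod γ hγ x y hsol) ht
  refine ⟨⟨max (ρ + γ * κ + η + |xstar|) Y, fun t ht ↦ ⟨le_max_of_le_left ?_,
    le_max_of_le_right (hbound ht).2⟩⟩, fun t ht ↦ ?_⟩
  · have hle : max (ρ - (t - 1) * (γ * κ)) (δ + η) ≤ ρ + γ * κ :=
      max_le (by linarith [mul_nonneg ht hpos.le]) (by linarith)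
    linarith [(hbound ht).1, abs_sub_abs_le_abs_sub (x t) xstar]
  · have ht₀ : 0 ≤ t := le_trans (by have := hγ.1; positivity) ht
    have hlate : ρ ≤ (t - 1) * (γ * κ) := calc
      ρ = (ρ / κ + γstar - γstar) * κ := by field_simp; ring
      _ ≤ (t * γ - γ) * κ := by
        gcongr
        · exact (div_le_iff₀ hγ.1).1 ht
        · exact hγ.2.le
      _ = (t - 1) * (γ * κ) := by ring
    have hle : max (ρ - (t - 1) * (γ * κ)) (δ + η) ≤ δ + η := max_le (by linarith) le_rfl
    linarith [(hbound ht₀).1]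

/-- Theorem 1, semiglobal practical form for the HPF-ES scheme. -/
theorem hpf_es_semiglobal_practical (h : ℝ → ℝ) (hsmooth : ContDiff ℝ (⊤ : ℕ∞) h)
    (xstar : ℝ) (hmin : ∀ x : ℝ, x ≠ xstar → h xstar < h x)
    (α : ℝ → ℝ) (hα_cont : ContinuousOn α (Set.Ici 0))
    (hα_mono : StrictMonoOn α (Set.Ici 0)) (hα0 : α 0 = 0)
    (hα_top : Tendsto α atTop atTop)
    (hlb : ∀ x₁ x₂ : ℝ, (x₁ - xstar) * (x₂ - xstar) ≥ 0 → α |x₂ - x₁| ≤ |h x₂ - h x₁|)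
    (r₀ δ d : ℝ) (hr₀ : 0 < r₀) (hδ : 0 < δ) (hd : 0 < d) :
    ∃ tbar γstar : ℝ, 0 < tbar ∧ 0 < γstar ∧
      ∀ γ : ℝ, γ ∈ Set.Ioo 0 γstar →
        ∀ x₀ ybar₀ : ℝ, |x₀ - xstar| ≤ r₀ → |ybar₀ - a0 h δ x₀ / 2| ≤ γstar →
          ∀ x ybar : ℝ → ℝ, Differentiable ℝ x → Differentiable ℝ ybar →
            x 0 = x₀ → ybar 0 = ybar₀ →
            (∀ t : ℝ, 0 ≤ t →
              HasDerivAt x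
                (-γ * (h (x t + δ * Real.sin (2 * Real.pi * t)) - ybar t)
                  * Real.sin (2 * Real.pi * t)) t) →
            (∀ t : ℝ, 0 ≤ t →
              HasDerivAt ybar
                (γ * (h (x t + δ * Real.sin (2 * Real.pi * t)) - ybar t)) t) →
            (∃ M : ℝ, ∀ t : ℝ, 0 ≤ t → |x t| ≤ M ∧ |ybar t| ≤ M) ∧
            (∀ t : ℝ, tbar / γ ≤ t → |x t - xstar| ≤ δ + d) := by
  have hαpos : ∀ r, 0 < r → 0 < α r := fun r hr ↦ hα0 ▸ hα_mono (Set.mem_Ici.2 le_rfl) hr.le hr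
  have hle : ∀ x, h xstar ≤ h x := fun x ↦
    (eq_or_ne x xstar).elim (fun hx ↦ hx ▸ le_rfl) fun hx ↦ (hmin x hx).le
  obtain ⟨hanti, hmono⟩ :=
    strictAntiOn_Iic_and_strictMonoOn_Ici hsmooth.continuous hle hαpos hlb
  obtain ⟨r₁, hr₁⟩ := exists_abs_le_of_abs_sub_a0_le hsmooth.continuous δ xstar r₀ 1
  obtain ⟨tbar, γstar, htbar, hγstar, hgeneral⟩ := hpf_es_semiglobal_practical_general
    hsmooth.continuous hanti hmono isDither_sin hδ hd r₀ r₁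
  refine ⟨tbar, min γstar 1, htbar, by positivity, ?_⟩
  rintro γ ⟨hγ, hγlt⟩ x₀ ybar₀ hx₀ hy₀ x ybar - - rfl rfl hx hy
  exact hgeneral γ ⟨hγ, hγlt.trans_le (min_le_left _ _)⟩ x ybar
    ⟨fun t ht ↦ (hx t ht).hasDerivWithinAt, fun t ht ↦ (hy t ht).hasDerivWithinAt⟩ hx₀
    (hr₁ _ _ hx₀ (hy₀.trans (min_le_right _ _)))
end

section
/- (Uniformity of γ* with respect to the cost magnitude) Fix a class-K∞ function α and constants L > 0, r₀ > 0, δ > 0, d > 0, and set r := r₀ + 2δ + d. Then there exist t̄ > 0 and γ* > 0, depending only on α, L, r₀, δ, d (and in particular not on any upper bound for |h|), such that for EVERY smooth h : ℝ → ℝ having a unique global minimiser x* (h(x) > h(x*) for all x ≠ x*), satisfying |h(x₂) − h(x₁)| ≥ α(|x₂ − x₁|) whenever (x₁ − x*)(x₂ − x*) ≥ 0, and Lipschitz with constant L on [x* − r, x* + r], the following holds: for every γ ∈ (0, γ*) and every initial condition (x₀, ȳ₀) with |x₀ − x*| ≤ r₀ and |ȳ₀ − a₀δ(x₀)/2| ≤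 γ*, every solution (x, ȳ) of the HPF-ES system ẋ(t) = −γ·(h(x(t) + δ sin(2πt)) − ȳ(t))·sin(2πt), ẏ̄(t) = γ·(h(x(t) + δ sin(2πt)) − ȳ(t)) with (x(0), ȳ(0)) = (x₀, ȳ₀) is bounded and satisfies |x(t) − x*| ≤ δ + d for all t ≥ t̄/γ. -/
open Real MeasureTheory intervalIntegral Filter

/-!
The vector field involves the cost only through `h - ȳ`. Measured from the local mean `a0 / 2`, both
`h` on the dither interval and the filter state `ȳ` stay within bounds that depend on `L` and `δ`
alone, so the state moves `O(γ)` per dither period and deviates by `O(γ²)` from its averaged motion,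
uniformly in the magnitude of `h`. Since `sin` has mean zero, the averaged drift of `x` does not see
`ȳ` either: it is `-γ * (b1 / 2)`, which outside the `δ`-ball points towards the minimiser with
strength at least `γ * ditherGain α δ`. Hence, sampled at integer times, the distance of `x` to the
minimiser decreases by at least `γ * (ditherGain α δ / 2)` per period until it is at most
`δ + d / 2`.
-/

open Set
open scoped NNReal Topology

section IntegralCurve

variable {E : Type*} [NormedAddCommGroup E] [NormedSpace ℝ E]
  {z : ℝ → E} {v : ℝ → E → E} {a b : ℝ}

theorem norm_integralCurve_sub_le {C : ℝ} (hC : 0 ≤ C) (hz : IsIntegralCurveOn z v (Icc a b))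
    (hv : ∀ t ∈ Ico a b, ∀ p, ‖p - z a‖ ≤ C * (b - a) → ‖v t p‖ < C) :
    ∀ t ∈ Icc a b, ‖z t - z a‖ ≤ C * (t - a) := by
  refine image_norm_le_of_norm_deriv_right_lt_deriv_boundary
    (f' := fun t => v t (z t)) (B' := fun _ => C) (hz.continuousOn.sub continuousOn_const)
    (fun t ht => ?_) (by simp) (fun t => ?_) fun t ht hnorm => hv t ht _ ?_
  · exact ((hz t (Ico_subset_Icc_self ht)).mono_of_mem_nhdsWithin
      (Icc_mem_nhdsGE_of_mem ht)).sub_const _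
  · simpa using ((hasDerivAt_id t).sub_const a).const_mul C
  · refine hnorm.le.trans ?_
    gcongr
    exact ht.2.le

theorem norm_integralCurve_sub_sub_integral_le [CompleteSpace E] {K : ℝ} (hab : a ≤ b)
    (hz : IsIntegralCurveOn z v (Icc a b))
    (hv : ContinuousOn (fun t => v t (z a)) (Icc a b))
    (hK : ∀ t ∈ Ico a b, ‖v t (z t) - v t (z a)‖ ≤ K) :
    ‖z b - z a - ∫ t in a..b, v t (z a)‖ ≤ K * (b - a) := by
  have hderiv : ∀ t ∈ Icc a b, HasDerivWithinAt (fun t => z t - ∫ s in a..t, v s (z a))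
      (v t (z t) - v t (z a)) (Icc a b) t := by
    intro t ht
    have := Fact.mk ht
    refine (hz t ht).sub (integral_hasDerivWithinAt_right ?_ ?_ (hv t ht))
    · exact (hv.mono (Icc_subset_Icc_right ht.2)).intervalIntegrable_of_Icc ht.1
    · exact hv.stronglyMeasurableAtFilter_nhdsWithin measurableSet_Icc t
  have := norm_image_sub_le_of_norm_deriv_le_segment' hderiv hK b (right_mem_Icc.2 hab)
  rwa [integral_same, sub_zero, sub_right_comm] at this

end IntegralCurve

section FourierCoefficients

/-- First Fourier sine coefficient of `t ↦ h (x + δ sin (2π t))`; up to sign and the factor `γ / 2`,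
the averaged HPF-ES drift of `x`. -/
noncomputable def b1 (h : ℝ → ℝ) (δ x : ℝ) : ℝ :=
  2 * ∫ t in (0:ℝ)..1, h (x + δ * sin (2 * π * t)) * sin (2 * π * t)

theorem half_a0 (h : ℝ → ℝ) (δ x : ℝ) :
    a0 h δ x / 2 = ∫ t in (0:ℝ)..1, h (x + δ * sin (2 * π * t)) :=
  mul_div_cancel_left₀ _ two_ne_zero

theorem half_b1 (h : ℝ → ℝ) (δ x : ℝ) :
    b1 h δ x / 2 = ∫ t in (0:ℝ)..1, h (x + δ * sin (2 * π * t)) * sin (2 * π * t) :=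
  mul_div_cancel_left₀ _ two_ne_zero

theorem b1_neg (h : ℝ → ℝ) (δ x : ℝ) : b1 (-h) δ x = -b1 h δ x := by
  simp only [b1, Pi.neg_apply, neg_mul, intervalIntegral.integral_neg, mul_neg]

theorem integral_sin_two_pi_mul : ∫ t in (0:ℝ)..1, sin (2 * π * t) = 0 := by
  rw [intervalIntegral.integral_comp_mul_left (fun u => sin u) two_pi_pos.ne']
  simp

theorem abs_integral_zero_one_le {f : ℝ → ℝ} {C : ℝ} (hf : ∀ t, |f t| ≤ C) :
    |∫ t in (0:ℝ)..1, f t| ≤ C := by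
  simpa using norm_integral_le_of_norm_le_const (a := 0) (b := 1) (f := f) fun t _ => hf t

variable {h : ℝ → ℝ} {δ x x' : ℝ} {L : ℝ≥0}

theorem add_mul_sin_mem_Icc (hδ : 0 ≤ δ) (x θ : ℝ) : x + δ * sin θ ∈ Icc (x - δ) (x + δ) :=
  ⟨by nlinarith [neg_one_le_sin θ], by nlinarith [sin_le_one θ]⟩

theorem continuous_comp_dither (hδ : 0 ≤ δ) (hh : ContinuousOn h (Icc (x - δ) (x + δ))) :
    Continuous fun t : ℝ => h (x + δ * sin (2 * π * t)) :=
  hh.comp_continuous (by fun_prop) fun _ => add_mul_sin_mem_Icc hδ _ _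

theorem half_b1_eq_integral_sub_mul (hδ : 0 ≤ δ) (hh : ContinuousOn h (Icc (x - δ) (x + δ))) :
    b1 h δ x / 2 =
      ∫ t in (0:ℝ)..1, (h (x + δ * sin (2 * π * t)) - h x) * sin (2 * π * t) := by
  have hmul : Continuous fun t : ℝ => h (x + δ * sin (2 * π * t)) * sin (2 * π * t) :=
    (continuous_comp_dither hδ hh).mul (by fun_prop)
  have hconst : Continuous fun t : ℝ => h x * sin (2 * π * t) := by fun_prop
  simp only [sub_mul]
  rw [intervalIntegral.integral_sub (hmul.intervalIntegrable _ _) (hconst.intervalIntegrable _ _),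
    intervalIntegral.integral_const_mul, integral_sin_two_pi_mul, mul_zero, sub_zero, half_b1]

theorem abs_sub_half_a0_le (hh : LipschitzOnWith L h (Icc (x - δ) (x + δ)))
    {u : ℝ} (hu : u ∈ Icc (x - δ) (x + δ)) : |h u - a0 h δ x / 2| ≤ 2 * L * δ := by
  have hδ : 0 ≤ δ := by linarith [hu.1, hu.2]
  have hmean : h u - a0 h δ x / 2 = ∫ t in (0:ℝ)..1, (h u - h (x + δ * sin (2 * π * t))) := by
    rw [intervalIntegral.integral_sub intervalIntegrable_const
      ((continuous_comp_dither hδ hh.continuousOn).intervalIntegrable _ _), half_a0]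
    simp
  rw [hmean]
  refine abs_integral_zero_one_le fun t => ?_
  have hv := add_mul_sin_mem_Icc hδ x (2 * π * t)
  calc |h u - h (x + δ * sin (2 * π * t))| ≤ L * |u - (x + δ * sin (2 * π * t))| :=
        hh.dist_le_mul _ hu _ hv
    _ ≤ L * (2 * δ) := by
        gcongr
        exact abs_sub_le_iff.2 ⟨by linarith [hu.2, hv.1], by linarith [hu.1, hv.2]⟩
    _ = 2 * L * δ := by ring

theorem abs_half_a0_sub_half_a0_le {s : Set ℝ} (hδ : 0 ≤ δ) (hh : LipschitzOnWith L h s)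
    (hx : Icc (x - δ) (x + δ) ⊆ s) (hx' : Icc (x' - δ) (x' + δ) ⊆ s) :
    |a0 h δ x / 2 - a0 h δ x' / 2| ≤ L * |x - x'| := by
  rw [half_a0, half_a0, ← intervalIntegral.integral_sub
    ((continuous_comp_dither hδ (hh.continuousOn.mono hx)).intervalIntegrable _ _)
    ((continuous_comp_dither hδ (hh.continuousOn.mono hx')).intervalIntegrable _ _)]
  refine abs_integral_zero_one_le fun t => ?_
  simpa only [Real.dist_eq, add_sub_add_right_eq_sub] using hh.dist_le_mul
    _ (hx (add_mul_sin_mem_Icc hδ x (2 * π * t))) _ (hx' (add_mul_sin_mem_Icc hδ x' (2 * π * t)))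

theorem abs_half_b1_le (hδ : 0 ≤ δ) (hh : LipschitzOnWith L h (Icc (x - δ) (x + δ))) :
    |b1 h δ x / 2| ≤ L * δ := by
  rw [half_b1_eq_integral_sub_mul hδ hh.continuousOn]
  refine abs_integral_zero_one_le fun t => ?_
  have hlip : |h (x + δ * sin (2 * π * t)) - h x| ≤ L * (δ * |sin (2 * π * t)|) := by
    simpa only [Real.dist_eq, add_sub_cancel_left, abs_mul, abs_of_nonneg hδ] using
      hh.dist_le_mul _ (add_mul_sin_mem_Icc hδ x (2 * π * t)) x ⟨by linarith, by linarith⟩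
  have hsin : |sin (2 * π * t)| ≤ 1 := abs_sin_le_one _
  calc |(h (x + δ * sin (2 * π * t)) - h x) * sin (2 * π * t)|
      ≤ L * (δ * |sin (2 * π * t)|) * |sin (2 * π * t)| := by rw [abs_mul]; gcongr
    _ ≤ L * (δ * 1) * 1 := by gcongr
    _ = L * δ := by ring

end FourierCoefficients

section DitherGain

/-- Lower bound for the averaged drift `b1 / 2` outside the `δ`-neighbourhood of the minimiser that
a cost with growth function `α` guarantees. -/
noncomputable def ditherGain (α : ℝ → ℝ) (δ : ℝ) : ℝ :=
  ∫ t in (0:ℝ)..1, α (δ * |sin (2 * π * t)|) * |sin (2 * π * t)|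

variable {α h : ℝ → ℝ} {δ x : ℝ}

theorem continuous_ditherGain_integrand (hδ : 0 ≤ δ) (hα : ContinuousOn α (Ici 0)) :
    Continuous fun t : ℝ => α (δ * |sin (2 * π * t)|) * |sin (2 * π * t)| :=
  (hα.comp_continuous (by fun_prop) fun _ => mul_nonneg hδ (abs_nonneg _)).mul (by fun_prop)

theorem ditherGain_pos (hδ : 0 < δ) (hα : ContinuousOn α (Ici 0)) (hα_pos : ∀ s, 0 < s → 0 < α s) :
    0 < ditherGain α δ := by
  refine intervalIntegral.integral_pos one_pos
    (continuous_ditherGain_integrand hδ.le hα).continuousOn (fun t _ => ?_) ⟨1 / 4, by norm_num, ?_⟩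
  · rcases (abs_nonneg (sin (2 * π * t))).eq_or_lt with hs | hs
    · rw [← hs, mul_zero]
    · exact (mul_pos (hα_pos _ (mul_pos hδ hs)) hs).le
  · have hsin : sin (2 * π * (1 / 4)) = 1 := by
      rw [show 2 * π * (1 / 4) = π / 2 by ring, sin_pi_div_two]
    simpa only [hsin, abs_one, mul_one] using hα_pos δ hδ

theorem ditherGain_le_half_b1 (hδ : 0 ≤ δ) (hα : ContinuousOn α (Ici 0))
    (hh : ContinuousOn h (Icc (x - δ) (x + δ))) (hmono : MonotoneOn h (Icc (x - δ) (x + δ)))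
    (hgrowth : ∀ u ∈ Icc (x - δ) (x + δ), α |u - x| ≤ |h u - h x|) :
    ditherGain α δ ≤ b1 h δ x / 2 := by
  have hcont := continuous_comp_dither hδ hh
  rw [half_b1_eq_integral_sub_mul hδ hh]
  refine integral_mono_on zero_le_one
    ((continuous_ditherGain_integrand hδ hα).intervalIntegrable _ _)
    (((hcont.sub continuous_const).mul (by fun_prop)).intervalIntegrable _ _) fun t _ => ?_
  have hu := add_mul_sin_mem_Icc hδ x (2 * π * t)
  have hx : x ∈ Icc (x - δ) (x + δ) := ⟨by linarith, by linarith⟩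
  generalize sin (2 * π * t) = s at hu ⊢
  have hsign : 0 ≤ (h (x + δ * s) - h x) * s := by
    rcases le_total 0 s with hs | hs
    · exact mul_nonneg (sub_nonneg.2 (hmono hx hu (by nlinarith))) hs
    · exact mul_nonneg_of_nonpos_of_nonpos (sub_nonpos.2 (hmono hu hx (by nlinarith))) hs
  calc α (δ * |s|) * |s| = α |x + δ * s - x| * |s| := by
        rw [add_sub_cancel_left, abs_mul, abs_of_nonneg hδ]
    _ ≤ |h (x + δ * s) - h x| * |s| := by gcongr; exact hgrowth _ hu
    _ = (h (x + δ * s) - h x) * s := by rw [← abs_mul, abs_of_nonneg hsign]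

end DitherGain

/-- The class of costs over which the HPF-ES bounds are uniform: on the ball of radius `r` about the
minimiser `xstar`, growth at least `α` on each side of `xstar` and Lipschitz constant `L`. Only the
values of `h` on that ball matter. -/
structure IsESCost (α : ℝ → ℝ) (L : ℝ≥0) (xstar r : ℝ) (h : ℝ → ℝ) : Prop where
  isMinOn : IsMinOn h (Icc (xstar - r) (xstar + r)) xstar
  growth : ∀ u ∈ Icc (xstar - r) (xstar + r), ∀ v ∈ Icc (xstar - r) (xstar + r),
    0 ≤ (u - xstar) * (v - xstar) → α |v - u| ≤ |h v - h u|
  lipschitz : LipschitzOnWith L h (Icc (xstar - r) (xstar + r))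

namespace IsESCost

variable {α h : ℝ → ℝ} {L : ℝ≥0} {xstar r δ x : ℝ}

theorem injOn (hcost : IsESCost α L xstar r h) (hα_pos : ∀ s, 0 < s → 0 < α s) {s : Set ℝ}
    (hs : s ⊆ Icc (xstar - r) (xstar + r))
    (hside : ∀ u ∈ s, ∀ v ∈ s, 0 ≤ (u - xstar) * (v - xstar)) : InjOn h s := by
  intro u hu v hv huv
  by_contra hne
  have hgrowth := hcost.growth u (hs hu) v (hs hv) (hside u hu v hv)
  rw [huv, sub_self, abs_zero] at hgrowth
  exact (hα_pos _ (abs_sub_pos.2 (Ne.symm hne))).not_ge hgrowth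

theorem monotoneOn_right (hcost : IsESCost α L xstar r h) (hα_pos : ∀ s, 0 < s → 0 < α s)
    (hr : 0 ≤ r) : MonotoneOn h (Icc xstar (xstar + r)) := by
  have hsub : Icc xstar (xstar + r) ⊆ Icc (xstar - r) (xstar + r) :=
    Icc_subset_Icc_left (by linarith)
  exact (ContinuousOn.strictMonoOn_of_injOn_Icc (by linarith)
    (hcost.isMinOn ⟨by linarith, le_rfl⟩) (hcost.lipschitz.continuousOn.mono hsub)
    (hcost.injOn hα_pos hsub fun u hu v hv =>
      mul_nonneg (sub_nonneg.2 hu.1) (sub_nonneg.2 hv.1))).monotoneOn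

theorem antitoneOn_left (hcost : IsESCost α L xstar r h) (hα_pos : ∀ s, 0 < s → 0 < α s)
    (hr : 0 ≤ r) : AntitoneOn h (Icc (xstar - r) xstar) := by
  have hsub : Icc (xstar - r) xstar ⊆ Icc (xstar - r) (xstar + r) :=
    Icc_subset_Icc_right (by linarith)
  exact (ContinuousOn.strictAntiOn_of_injOn_Icc (by linarith)
    (hcost.isMinOn ⟨le_rfl, by linarith⟩) (hcost.lipschitz.continuousOn.mono hsub)
    (hcost.injOn hα_pos hsub fun u hu v hv =>
      mul_nonneg_of_nonpos_of_nonpos (sub_nonpos.2 hu.2) (sub_nonpos.2 hv.2))).antitoneOn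

theorem ditherGain_le_half_b1 (hcost : IsESCost α L xstar r h) (hα : ContinuousOn α (Ici 0))
    (hα_pos : ∀ s, 0 < s → 0 < α s) (hδ : 0 ≤ δ) (hx : xstar + δ ≤ x) (hxr : x + δ ≤ xstar + r) :
    ditherGain α δ ≤ b1 h δ x / 2 := by
  have hright : Icc (x - δ) (x + δ) ⊆ Icc xstar (xstar + r) := Icc_subset_Icc (by linarith) hxr
  have hsub : Icc (x - δ) (x + δ) ⊆ Icc (xstar - r) (xstar + r) :=
    Icc_subset_Icc (by linarith) hxr
  refine _root_.ditherGain_le_half_b1 hδ hα (hcost.lipschitz.continuousOn.mono hsub)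
    ((hcost.monotoneOn_right hα_pos (by linarith)).mono hright) fun u hu => ?_
  exact hcost.growth x ⟨by linarith, by linarith⟩ u (hsub hu)
    (mul_nonneg (by linarith) (sub_nonneg.2 (hright hu).1))

theorem half_b1_le_neg_ditherGain (hcost : IsESCost α L xstar r h) (hα : ContinuousOn α (Ici 0))
    (hα_pos : ∀ s, 0 < s → 0 < α s) (hδ : 0 ≤ δ) (hx : x ≤ xstar - δ) (hxr : xstar - r ≤ x - δ) :
    b1 h δ x / 2 ≤ -ditherGain α δ := by
  have hleft : Icc (x - δ) (x + δ) ⊆ Icc (xstar - r) xstar := Icc_subset_Icc hxr (by linarith)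
  have hsub : Icc (x - δ) (x + δ) ⊆ Icc (xstar - r) (xstar + r) :=
    Icc_subset_Icc hxr (by linarith)
  have hgain : ditherGain α δ ≤ b1 (-h) δ x / 2 := by
    refine _root_.ditherGain_le_half_b1 hδ hα (hcost.lipschitz.continuousOn.mono hsub).neg
      ((hcost.antitoneOn_left hα_pos (by linarith)).mono hleft).neg fun u hu => ?_
    rw [Pi.neg_apply, Pi.neg_apply, neg_sub_neg, abs_sub_comm (h x)]
    exact hcost.growth x ⟨by linarith, by linarith⟩ u (hsub hu)
      (mul_nonneg_of_nonpos_of_nonpos (by linarith) (sub_nonpos.2 (hleft hu).2))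
  rw [b1_neg, neg_div] at hgain
  linarith

end IsESCost

section VectorField

/-- The HPF-ES scheme as a time-dependent vector field on the states `p = (x, ȳ)`. -/
noncomputable def hpfES (h : ℝ → ℝ) (δ γ t : ℝ) (p : ℝ × ℝ) : ℝ × ℝ :=
  (γ * (h (p.1 + δ * sin (2 * π * t)) - p.2)) • (-sin (2 * π * t), 1)

/-- The average of `hpfES h δ γ` over one dither period. -/
noncomputable def averagedHPFES (h : ℝ → ℝ) (δ γ : ℝ) (p : ℝ × ℝ) : ℝ × ℝ :=
  (-(γ * (b1 h δ p.1 / 2)), γ * (a0 h δ p.1 / 2 - p.2))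

variable {h : ℝ → ℝ} {δ γ : ℝ} {L : ℝ≥0} {p q : ℝ × ℝ}

theorem norm_neg_sin_one (θ : ℝ) : ‖((-sin θ, 1) : ℝ × ℝ)‖ = 1 := by
  rw [Prod.norm_def, norm_neg, norm_one, norm_eq_abs]
  exact max_eq_right (abs_sin_le_one θ)

theorem continuous_hpfES (hδ : 0 ≤ δ) (hh : ContinuousOn h (Icc (p.1 - δ) (p.1 + δ))) :
    Continuous fun t => hpfES h δ γ t p :=
  (continuous_const.mul ((continuous_comp_dither hδ hh).sub continuous_const)).smul
    (by fun_prop)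

theorem periodic_hpfES (h : ℝ → ℝ) (δ γ : ℝ) (p : ℝ × ℝ) :
    Function.Periodic (fun t => hpfES h δ γ t p) 1 := by
  intro t
  simp only [hpfES, mul_add, mul_one, sin_add_two_pi]

theorem integral_hpfES (hδ : 0 ≤ δ) (hh : ContinuousOn h (Icc (p.1 - δ) (p.1 + δ))) (a : ℝ) :
    ∫ t in a..(a + 1), hpfES h δ γ t p = averagedHPFES h δ γ p := by
  have hcont := continuous_comp_dither hδ hh
  have hmul : Continuous fun t : ℝ => γ * (h (p.1 + δ * sin (2 * π * t)) * sin (2 * π * t)) :=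
    continuous_const.mul (hcont.mul (by fun_prop))
  have hconst : Continuous fun t : ℝ => γ * p.2 * sin (2 * π * t) := by fun_prop
  have hint := (continuous_hpfES (γ := γ) hδ hh).intervalIntegrable (μ := volume) 0 1
  rw [(periodic_hpfES h δ γ p).intervalIntegral_add_eq a 0, zero_add]
  refine Prod.ext ?_ ?_
  · calc (∫ t in (0:ℝ)..1, hpfES h δ γ t p).1
        = ∫ t in (0:ℝ)..1, (hpfES h δ γ t p).1 :=
          ((ContinuousLinearMap.fst ℝ ℝ ℝ).intervalIntegral_comp_comm hint).symm
      _ = ∫ t in (0:ℝ)..1, (γ * p.2 * sin (2 * π * t)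
            - γ * (h (p.1 + δ * sin (2 * π * t)) * sin (2 * π * t))) := by
          refine intervalIntegral.integral_congr fun t _ => ?_
          simp only [hpfES, Prod.smul_fst, smul_eq_mul]
          ring
      _ = -(γ * (b1 h δ p.1 / 2)) := by
          rw [intervalIntegral.integral_sub (hconst.intervalIntegrable _ _)
              (hmul.intervalIntegrable _ _),
            intervalIntegral.integral_const_mul, intervalIntegral.integral_const_mul,
            integral_sin_two_pi_mul, half_b1, mul_zero, zero_sub]
  · calc (∫ t in (0:ℝ)..1, hpfES h δ γ t p).2
        = ∫ t in (0:ℝ)..1, (hpfES h δ γ t p).2 :=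
          ((ContinuousLinearMap.snd ℝ ℝ ℝ).intervalIntegral_comp_comm hint).symm
      _ = ∫ t in (0:ℝ)..1, γ * (h (p.1 + δ * sin (2 * π * t)) - p.2) := by
          simp only [hpfES, Prod.smul_snd, smul_eq_mul, mul_one]
      _ = γ * (a0 h δ p.1 / 2 - p.2) := by
          rw [intervalIntegral.integral_const_mul, intervalIntegral.integral_sub
            (hcont.intervalIntegrable _ _) intervalIntegrable_const, half_a0]
          simp

theorem norm_hpfES_le (hδ : 0 ≤ δ) (hγ : 0 ≤ γ)
    (hh : LipschitzOnWith L h (Icc (p.1 - δ) (p.1 + δ))) (t : ℝ) :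
    ‖hpfES h δ γ t p‖ ≤ γ * (2 * L * δ + |p.2 - a0 h δ p.1 / 2|) := by
  have hmean := abs_sub_half_a0_le hh (add_mul_sin_mem_Icc hδ p.1 (2 * π * t))
  rw [hpfES, norm_smul, norm_neg_sin_one, mul_one, norm_mul, norm_of_nonneg hγ, norm_eq_abs,
    abs_sub_comm p.2]
  gcongr
  exact (abs_sub_le _ (a0 h δ p.1 / 2) _).trans (by gcongr)

theorem norm_hpfES_sub_le {s : Set ℝ} (hδ : 0 ≤ δ) (hγ : 0 ≤ γ) (hh : LipschitzOnWith L h s)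
    (hp : Icc (p.1 - δ) (p.1 + δ) ⊆ s) (hq : Icc (q.1 - δ) (q.1 + δ) ⊆ s) (t : ℝ) :
    ‖hpfES h δ γ t p - hpfES h δ γ t q‖ ≤ γ * ((L + 1) * ‖p - q‖) := by
  have hlip := hh.dist_le_mul _ (hp (add_mul_sin_mem_Icc hδ p.1 (2 * π * t)))
    _ (hq (add_mul_sin_mem_Icc hδ q.1 (2 * π * t)))
  rw [dist_add_right, Real.dist_eq, Real.dist_eq] at hlip
  have hfst : |p.1 - q.1| ≤ ‖p - q‖ := norm_fst_le (p - q)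
  have hsnd : |p.2 - q.2| ≤ ‖p - q‖ := norm_snd_le (p - q)
  rw [hpfES, hpfES, ← sub_smul, norm_smul, norm_neg_sin_one, mul_one, ← mul_sub, norm_mul,
    norm_of_nonneg hγ, norm_eq_abs, sub_sub_sub_comm]
  gcongr
  calc _ ≤ L * |p.1 - q.1| + |p.2 - q.2| := (abs_sub _ _).trans (by gcongr)
    _ ≤ L * ‖p - q‖ + ‖p - q‖ := by gcongr
    _ = (L + 1) * ‖p - q‖ := by ring

theorem isIntegralCurveOn_hpfES {x ybar : ℝ → ℝ}
    (hx : ∀ t, 0 ≤ t → HasDerivAt x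
      (-γ * (h (x t + δ * sin (2 * π * t)) - ybar t) * sin (2 * π * t)) t)
    (hy : ∀ t, 0 ≤ t → HasDerivAt ybar (γ * (h (x t + δ * sin (2 * π * t)) - ybar t)) t) :
    IsIntegralCurveOn (fun t => (x t, ybar t)) (hpfES h δ γ) (Ici 0) := by
  intro t ht
  convert ((hx t ht).prodMk (hy t ht)).hasDerivWithinAt using 1
  exact Prod.ext (by simp only [hpfES, Prod.smul_fst, smul_eq_mul]; ring)
    (by simp only [hpfES, Prod.smul_snd, smul_eq_mul, mul_one])

end VectorField

section OnePeriod

/-- Radius of the band around the local mean `a0 / 2` of the cost in which the filter state `ȳ`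
stays: `x` drifts at averaged speed at most `γ L δ`, hence the mean at speed at most `γ L² δ`; the
summand `1` absorbs the averaging error. -/
def filterTolerance (L : ℝ≥0) (δ : ℝ) : ℝ := L ^ 2 * δ + 1

/-- Bound on the speed of the HPF-ES state divided by `γ`, over a period that starts with `ȳ` in its
band: `2 L δ` bounds the deviation of the cost from its local mean, and the summand `1` absorbs the
motion of the state within the period. -/
def speedBound (L : ℝ≥0) (δ : ℝ) : ℝ := 2 * L * δ + filterTolerance L δ + 1

/-- Smallness of `γ` required by the averaging argument: over one period the state moves by at most
`speedBound L δ * γ`, and deviates from its averaged motion by `γ` times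
`(L + 1) * speedBound L δ * γ`; `c` is the guaranteed averaged drift. -/
structure IsAdmissibleGain (L : ℝ≥0) (δ d c γ : ℝ) : Prop where
  pos : 0 < γ
  lt_one : γ < 1
  step_lt_dither : speedBound L δ * γ < δ
  step_lt_margin : speedBound L δ * γ < d / 2
  remainder_lt_drift : (L + 1) * speedBound L δ * γ < c / 2
  scaled_remainder_lt_one : (L + 1) * ((L + 1) * speedBound L δ * γ) < 1

theorem exists_isAdmissibleGain (L : ℝ≥0) {δ d c : ℝ} (hδ : 0 < δ) (hd : 0 < d) (hc : 0 < c) :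
    ∃ γstar ∈ Ioc (0:ℝ) 1, ∀ γ ∈ Ioo 0 γstar, IsAdmissibleGain L δ d c γ := by
  have small : ∀ M ε : ℝ, 0 < ε → ∀ᶠ γ in 𝓝[>] 0, M * γ < ε := by
    intro M ε hε
    have hlim : Tendsto (fun γ => M * γ) (𝓝[>] 0) (𝓝 0) :=
      tendsto_nhdsWithin_of_tendsto_nhds (Continuous.tendsto' (by fun_prop) _ _ (mul_zero M))
    exact hlim.eventually_lt_const hε
  have hall : ∀ᶠ γ in 𝓝[>] 0, IsAdmissibleGain L δ d c γ := by
    filter_upwards [self_mem_nhdsWithin, small 1 1 one_pos, small (speedBound L δ) δ hδ,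
      small (speedBound L δ) (d / 2) (half_pos hd),
      small ((L + 1) * speedBound L δ) (c / 2) (half_pos hc),
      small ((L + 1) * ((L + 1) * speedBound L δ)) 1 one_pos] with γ h₁ h₂ h₃ h₄ h₅ h₆
    exact ⟨h₁, by rwa [one_mul] at h₂, h₃, h₄, h₅, by rwa [← mul_assoc]⟩
  obtain ⟨u, hu, hsub⟩ := mem_nhdsGT_iff_exists_Ioo_subset.1 hall
  exact ⟨min u 1, ⟨lt_min hu one_pos, min_le_right _ _⟩,
    fun γ hγ => hsub ⟨hγ.1, hγ.2.trans_le (min_le_left _ _)⟩⟩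

variable {h : ℝ → ℝ} {δ d c γ a : ℝ} {L : ℝ≥0} {z : ℝ → ℝ × ℝ}

theorem one_le_filterTolerance (hδ : 0 ≤ δ) : 1 ≤ filterTolerance L δ :=
  le_add_of_nonneg_left (by positivity)

theorem speedBound_pos (hδ : 0 ≤ δ) : 0 < speedBound L δ := by
  have := one_le_filterTolerance (L := L) hδ
  unfold speedBound
  positivity

theorem IsAdmissibleGain.remainder_lt_one (hγ : IsAdmissibleGain L δ d c γ) (hδ : 0 ≤ δ) :
    (L + 1) * speedBound L δ * γ < 1 := by
  have hpos := hγ.pos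
  have hspeed := speedBound_pos (L := L) hδ
  exact (le_mul_of_one_le_left (by positivity) (by simp)).trans_lt hγ.scaled_remainder_lt_one

theorem IsAdmissibleGain.margin_pos (hγ : IsAdmissibleGain L δ d c γ) (hδ : 0 ≤ δ) : 0 < d := by
  linarith [hγ.step_lt_margin, mul_pos (speedBound_pos (L := L) hδ) hγ.pos]

theorem Icc_sub_add_subset_of_norm_sub_le {ρ : ℝ} {p q : ℝ × ℝ} (δ : ℝ) (hq : ‖q - p‖ ≤ ρ) :
    Icc (q.1 - δ) (q.1 + δ) ⊆ Icc (p.1 - (δ + ρ)) (p.1 + (δ + ρ)) := by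
  have hfst := abs_le.1 ((norm_fst_le (q - p)).trans hq)
  rw [Prod.fst_sub] at hfst
  exact Icc_subset_Icc (by linarith) (by linarith)

theorem norm_sub_le_of_isIntegralCurveOn_hpfES
    (hδ : 0 ≤ δ) (hγ0 : 0 < γ) (hγ : (L + 1) * speedBound L δ * γ < 1)
    (hz : IsIntegralCurveOn z (hpfES h δ γ) (Icc a (a + 1)))
    (hh : LipschitzOnWith L h (Icc ((z a).1 - (δ + speedBound L δ * γ))
      ((z a).1 + (δ + speedBound L δ * γ))))
    (hy : |(z a).2 - a0 h δ (z a).1 / 2| ≤ filterTolerance L δ) :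
    ∀ t ∈ Icc a (a + 1), ‖z t - z a‖ ≤ speedBound L δ * γ := by
  have hspeed := speedBound_pos (L := L) hδ
  have hbase := Icc_sub_add_subset_of_norm_sub_le (ρ := speedBound L δ * γ) (p := z a) δ
    (by rw [sub_self, norm_zero]; positivity)
  have hfield : ∀ t ∈ Ico a (a + 1), ∀ p, ‖p - z a‖ ≤ speedBound L δ * γ * (a + 1 - a) →
      ‖hpfES h δ γ t p‖ < speedBound L δ * γ := by
    intro t _ p hp
    rw [add_sub_cancel_left, mul_one] at hp
    have hpsub := Icc_sub_add_subset_of_norm_sub_le δ hp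
    calc ‖hpfES h δ γ t p‖
        ≤ ‖hpfES h δ γ t p - hpfES h δ γ t (z a)‖ + ‖hpfES h δ γ t (z a)‖ := by
          simpa using norm_add_le (hpfES h δ γ t p - hpfES h δ γ t (z a)) (hpfES h δ γ t (z a))
      _ ≤ γ * ((L + 1) * (speedBound L δ * γ)) + γ * (2 * L * δ + filterTolerance L δ) := by
          gcongr
          · exact (norm_hpfES_sub_le hδ hγ0.le hh hpsub hbase t).trans (by gcongr)
          · exact (norm_hpfES_le hδ hγ0.le (hh.mono hbase) t).trans (by gcongr)
      _ < speedBound L δ * γ := by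
          rw [← mul_add, mul_comm (speedBound L δ) γ]
          gcongr
          rw [mul_assoc] at hγ
          linarith [show speedBound L δ = 2 * L * δ + filterTolerance L δ + 1 from rfl]
  intro t ht
  refine (norm_integralCurve_sub_le (by positivity) hz hfield t ht).trans ?_
  exact mul_le_of_le_one_right (by positivity) (by linarith [ht.2])

theorem norm_sub_sub_averagedHPFES_le
    (hδ : 0 ≤ δ) (hγ0 : 0 < γ) (hγ : (L + 1) * speedBound L δ * γ < 1)
    (hz : IsIntegralCurveOn z (hpfES h δ γ) (Icc a (a + 1)))
    (hh : LipschitzOnWith L h (Icc ((z a).1 - (δ + speedBound L δ * γ))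
      ((z a).1 + (δ + speedBound L δ * γ))))
    (hy : |(z a).2 - a0 h δ (z a).1 / 2| ≤ filterTolerance L δ) :
    ‖z (a + 1) - z a - averagedHPFES h δ γ (z a)‖ ≤ γ * ((L + 1) * speedBound L δ * γ) := by
  have hspeed := speedBound_pos (L := L) hδ
  have hclose := norm_sub_le_of_isIntegralCurveOn_hpfES hδ hγ0 hγ hz hh hy
  have hbase := Icc_sub_add_subset_of_norm_sub_le (ρ := speedBound L δ * γ) (p := z a) δ
    (by rw [sub_self, norm_zero]; positivity)
  rw [← integral_hpfES hδ (hh.continuousOn.mono hbase) a]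
  refine (norm_integralCurve_sub_sub_integral_le (le_add_of_nonneg_right zero_le_one) hz
    (continuous_hpfES hδ (hh.continuousOn.mono hbase)).continuousOn fun t ht => ?_).trans_eq
    (by rw [add_sub_cancel_left, mul_one])
  have hzt := hclose t (Ico_subset_Icc_self ht)
  calc ‖hpfES h δ γ t (z t) - hpfES h δ γ t (z a)‖ ≤ γ * ((L + 1) * ‖z t - z a‖) :=
        norm_hpfES_sub_le hδ hγ0.le hh (Icc_sub_add_subset_of_norm_sub_le δ hzt) hbase t
    _ ≤ γ * ((L + 1) * (speedBound L δ * γ)) := by gcongr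
    _ = γ * ((L + 1) * speedBound L δ * γ) := by ring

theorem abs_fst_sub_le_of_isIntegralCurveOn_hpfES
    (hδ : 0 ≤ δ) (hγ0 : 0 < γ) (hγ : (L + 1) * speedBound L δ * γ < 1)
    (hz : IsIntegralCurveOn z (hpfES h δ γ) (Icc a (a + 1)))
    (hh : LipschitzOnWith L h (Icc ((z a).1 - (δ + speedBound L δ * γ))
      ((z a).1 + (δ + speedBound L δ * γ))))
    (hy : |(z a).2 - a0 h δ (z a).1 / 2| ≤ filterTolerance L δ) :
    |(z (a + 1)).1 - (z a).1| ≤ γ * (L * δ) + γ * ((L + 1) * speedBound L δ * γ) := by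
  have hspeed := speedBound_pos (L := L) hδ
  have hbase := Icc_sub_add_subset_of_norm_sub_le (ρ := speedBound L δ * γ) (p := z a) δ
    (by rw [sub_self, norm_zero]; positivity)
  have hdrift : |γ * (b1 h δ (z a).1 / 2)| ≤ γ * (L * δ) := by
    rw [abs_mul, abs_of_pos hγ0]
    gcongr
    exact abs_half_b1_le hδ (hh.mono hbase)
  have haverage : |(z (a + 1)).1 - (z a).1 - -(γ * (b1 h δ (z a).1 / 2))|
      ≤ γ * ((L + 1) * speedBound L δ * γ) :=
    (norm_fst_le _).trans (norm_sub_sub_averagedHPFES_le hδ hγ0 hγ hz hh hy)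
  rw [abs_le] at hdrift haverage ⊢
  constructor <;> linarith

-- Relaxation towards the mean, by the factor `1 - γ`, compensates the motion of the mean.
theorem abs_snd_sub_half_a0_le_of_isIntegralCurveOn_hpfES (hδ : 0 ≤ δ)
    (hγ : IsAdmissibleGain L δ d c γ)
    (hz : IsIntegralCurveOn z (hpfES h δ γ) (Icc a (a + 1)))
    (hh : LipschitzOnWith L h (Icc ((z a).1 - (δ + speedBound L δ * γ))
      ((z a).1 + (δ + speedBound L δ * γ))))
    (hy : |(z a).2 - a0 h δ (z a).1 / 2| ≤ filterTolerance L δ) :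
    |(z (a + 1)).2 - a0 h δ (z (a + 1)).1 / 2| ≤ filterTolerance L δ := by
  have hγ0 := hγ.pos
  have hγ1 : 0 ≤ 1 - γ := sub_nonneg.2 hγ.lt_one.le
  have hremainder := hγ.remainder_lt_one hδ
  have hclose := norm_sub_le_of_isIntegralCurveOn_hpfES hδ hγ0 hremainder hz hh hy
  have hbase := Icc_sub_add_subset_of_norm_sub_le δ (hclose a ⟨le_rfl, by linarith⟩)
  have hend := Icc_sub_add_subset_of_norm_sub_le δ (hclose (a + 1) ⟨by linarith, le_rfl⟩)
  have haverage : |(z (a + 1)).2 - (z a).2 - γ * (a0 h δ (z a).1 / 2 - (z a).2)|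
      ≤ γ * ((L + 1) * speedBound L δ * γ) :=
    (norm_snd_le _).trans (norm_sub_sub_averagedHPFES_le hδ hγ0 hremainder hz hh hy)
  have hmean : |a0 h δ (z (a + 1)).1 / 2 - a0 h δ (z a).1 / 2|
      ≤ L * (γ * (L * δ) + γ * ((L + 1) * speedBound L δ * γ)) :=
    (abs_half_a0_sub_half_a0_le hδ hh hend hbase).trans (by
      gcongr
      exact abs_fst_sub_le_of_isIntegralCurveOn_hpfES hδ hγ0 hremainder hz hh hy)
  set m := a0 h δ (z a).1 / 2
  set m' := a0 h δ (z (a + 1)).1 / 2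
  calc |(z (a + 1)).2 - m'|
      = |(1 - γ) * ((z a).2 - m) + ((z (a + 1)).2 - (z a).2 - γ * (m - (z a).2)) - (m' - m)| := by
        ring_nf
    _ ≤ |(1 - γ) * ((z a).2 - m)| + |(z (a + 1)).2 - (z a).2 - γ * (m - (z a).2)| + |m' - m| :=
        (abs_sub _ _).trans (add_le_add_left (abs_add_le _ _) _)
    _ ≤ (1 - γ) * filterTolerance L δ + γ * ((L + 1) * speedBound L δ * γ)
          + L * (γ * (L * δ) + γ * ((L + 1) * speedBound L δ * γ)) := by
        rw [abs_mul, abs_of_nonneg hγ1]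
        gcongr
    _ = (1 - γ) * filterTolerance L δ
          + γ * (L ^ 2 * δ + (L + 1) * ((L + 1) * speedBound L δ * γ)) := by ring
    _ ≤ (1 - γ) * filterTolerance L δ + γ * (L ^ 2 * δ + 1) := by
        gcongr
        exact hγ.scaled_remainder_lt_one.le
    _ = filterTolerance L δ := by rw [filterTolerance]; ring

end OnePeriod

section SampledDynamics

variable {α h : ℝ → ℝ} {L : ℝ≥0} {xstar r ρ r₀ δ d c γ a t : ℝ} {z : ℝ → ℝ × ℝ}

theorem IsESCost.lipschitzOnWith_reachable (hcost : IsESCost α L xstar r h)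
    (hγ : IsAdmissibleGain L δ d c γ) {x : ℝ} (hx : |x - xstar| + δ + d / 2 ≤ r) :
    LipschitzOnWith L h
      (Icc (x - (δ + speedBound L δ * γ)) (x + (δ + speedBound L δ * γ))) := by
  have hstep := hγ.step_lt_margin
  have habs := abs_le.1 (le_refl |x - xstar|)
  exact hcost.lipschitz.mono (Icc_subset_Icc (by linarith) (by linarith))

theorem abs_sub_le_max_of_period (hα : ContinuousOn α (Ici 0)) (hα_pos : ∀ s, 0 < s → 0 < α s)
    (hδ : 0 < δ) (hcost : IsESCost α L xstar r h)
    (hγ : IsAdmissibleGain L δ d (ditherGain α δ) γ)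
    (hz : IsIntegralCurveOn z (hpfES h δ γ) (Icc a (a + 1)))
    (hx : |(z a).1 - xstar| + δ + d / 2 ≤ r)
    (hy : |(z a).2 - a0 h δ (z a).1 / 2| ≤ filterTolerance L δ) :
    |(z (a + 1)).1 - xstar| ≤
      max (δ + d / 2) (|(z a).1 - xstar| - γ * (ditherGain α δ / 2)) := by
  have hlip := hcost.lipschitzOnWith_reachable hγ hx
  have hstep : |(z (a + 1)).1 - (z a).1| ≤ speedBound L δ * γ :=
    (norm_fst_le _).trans (norm_sub_le_of_isIntegralCurveOn_hpfES hδ.le hγ.pos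
      (hγ.remainder_lt_one hδ.le) hz hlip hy (a + 1) ⟨by linarith, le_rfl⟩)
  have haverage : |(z (a + 1)).1 - (z a).1 - -(γ * (b1 h δ (z a).1 / 2))|
      ≤ γ * ((L + 1) * speedBound L δ * γ) :=
    (norm_fst_le _).trans (norm_sub_sub_averagedHPFES_le hδ.le hγ.pos
      (hγ.remainder_lt_one hδ.le) hz hlip hy)
  have hremainder := mul_le_mul_of_nonneg_left hγ.remainder_lt_drift.le hγ.pos.le
  have hdither := hγ.step_lt_dither
  have hmargin := hγ.step_lt_margin
  have hradius := abs_le.1 (le_refl |(z a).1 - xstar|)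
  rw [abs_le] at hstep haverage
  rw [le_max_iff]
  rcases le_total (xstar + δ) (z a).1 with hright | hnear
  · have hdrift := mul_le_mul_of_nonneg_left
      (hcost.ditherGain_le_half_b1 hα hα_pos hδ.le hright (by linarith)) hγ.pos.le
    right
    rw [abs_of_nonneg (by linarith), abs_of_nonneg (by linarith)]
    linarith
  rcases le_total (z a).1 (xstar - δ) with hleft | hnear'
  · have hdrift := mul_le_mul_of_nonneg_left
      (hcost.half_b1_le_neg_ditherGain hα hα_pos hδ.le hleft (by linarith)) hγ.pos.le
    right
    rw [abs_of_nonpos (by linarith), abs_of_nonpos (by linarith)]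
    linarith
  · left
    rw [abs_le]
    constructor <;> linarith

/-- The states from which the one-period estimates apply: `x` within `ρ` of the minimiser, `ȳ` in
its band around the local mean of the cost. -/
def trackingRegion (L : ℝ≥0) (h : ℝ → ℝ) (xstar ρ δ : ℝ) : Set (ℝ × ℝ) :=
  {p | |p.1 - xstar| ≤ ρ ∧ |p.2 - a0 h δ p.1 / 2| ≤ filterTolerance L δ}

theorem isBounded_trackingRegion (hδ : 0 ≤ δ) (hr : ρ + δ ≤ r)
    (hh : LipschitzOnWith L h (Icc (xstar - r) (xstar + r))) :
    Bornology.IsBounded (trackingRegion L h xstar ρ δ) := by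
  refine isBounded_iff_forall_norm_le.2 ⟨max ρ (filterTolerance L δ + L * ρ)
    + ‖(xstar, a0 h δ xstar / 2)‖, fun p ⟨hx, hy⟩ => ?_⟩
  have hp := abs_le.1 hx
  have hmean := abs_half_a0_sub_half_a0_le (x := p.1) (x' := xstar) hδ hh
    (Icc_subset_Icc (by linarith) (by linarith)) (Icc_subset_Icc (by linarith) (by linarith))
  have hcenter : ‖p - (xstar, a0 h δ xstar / 2)‖ ≤ max ρ (filterTolerance L δ + L * ρ) := by
    refine max_le_max hx ((abs_sub_le _ (a0 h δ p.1 / 2) _).trans ?_)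
    gcongr
    exact hmean.trans (by gcongr)
  exact (norm_le_norm_sub_add p _).trans (by gcongr)

theorem abs_sub_le_max_and_mem_trackingRegion (hα : ContinuousOn α (Ici 0))
    (hα_pos : ∀ s, 0 < s → 0 < α s) (hδ : 0 < δ) (hcost : IsESCost α L xstar (r₀ + 2 * δ + d) h)
    (hγ : IsAdmissibleGain L δ d (ditherGain α δ) γ)
    (hz : IsIntegralCurveOn z (hpfES h δ γ) (Ici 0)) (hx₀ : |(z 0).1 - xstar| ≤ r₀)
    (hy₀ : |(z 0).2 - a0 h δ (z 0).1 / 2| ≤ filterTolerance L δ) (n : ℕ) :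
    |(z n).1 - xstar| ≤ max (δ + d / 2) (r₀ - n * (γ * (ditherGain α δ / 2))) ∧
      z n ∈ trackingRegion L h xstar (r₀ + δ + d / 2) δ := by
  have hgain : 0 < γ * (ditherGain α δ / 2) :=
    mul_pos hγ.pos (half_pos (ditherGain_pos hδ hα hα_pos))
  have hd := hγ.margin_pos hδ.le
  have hr₀ : 0 ≤ r₀ := (abs_nonneg _).trans hx₀
  have hradius : ∀ m : ℕ,
      max (δ + d / 2) (r₀ - m * (γ * (ditherGain α δ / 2))) ≤ r₀ + δ + d / 2 := fun m =>
    max_le (by linarith) (by linarith [mul_nonneg m.cast_nonneg hgain.le])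
  induction n with
  | zero => exact ⟨by simpa using Or.inr hx₀, by simpa using hx₀.trans (by linarith), by simpa⟩
  | succ n ih =>
    obtain ⟨hx, hxρ, hy⟩ := ih
    have hperiod := hz.mono (s' := Icc (n:ℝ) (n + 1)) fun t ht => n.cast_nonneg.trans ht.1
    have hdomain : |(z n).1 - xstar| + δ + d / 2 ≤ r₀ + 2 * δ + d := by linarith
    have hx' : |(z ↑(n + 1)).1 - xstar| ≤
        max (δ + d / 2) (r₀ - ↑(n + 1) * (γ * (ditherGain α δ / 2))) := by
      push_cast
      refine (abs_sub_le_max_of_period hα hα_pos hδ hcost hγ hperiod hdomain hy).trans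
        (max_le (le_max_left _ _) ?_)
      rw [le_max_iff] at hx ⊢
      exact hx.imp (fun h => by linarith) fun h => by linarith
    refine ⟨hx', hx'.trans (hradius _), ?_⟩
    push_cast
    exact abs_snd_sub_half_a0_le_of_isIntegralCurveOn_hpfES hδ.le hγ hperiod
      (hcost.lipschitzOnWith_reachable hγ hdomain) hy

theorem norm_sub_natFloor_le (hδ : 0 ≤ δ) (hcost : IsESCost α L xstar r h) (hr : ρ + δ + d / 2 ≤ r)
    (hγ : IsAdmissibleGain L δ d c γ) (hz : IsIntegralCurveOn z (hpfES h δ γ) (Ici 0))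
    (hregion : ∀ n : ℕ, z n ∈ trackingRegion L h xstar ρ δ) (ht : 0 ≤ t) :
    ‖z t - z ⌊t⌋₊‖ ≤ speedBound L δ * γ := by
  obtain ⟨hx, hy⟩ := hregion ⌊t⌋₊
  exact norm_sub_le_of_isIntegralCurveOn_hpfES hδ hγ.pos (hγ.remainder_lt_one hδ)
    (hz.mono fun s hs => ⌊t⌋₊.cast_nonneg.trans hs.1)
    (hcost.lipschitzOnWith_reachable hγ (by linarith)) hy t
    ⟨Nat.floor_le ht, (Nat.lt_floor_add_one t).le⟩

theorem exists_norm_le_of_natFloor {E : Type*} [SeminormedAddCommGroup E] {z : ℝ → E} {s : Set E}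
    {C : ℝ} (hs : Bornology.IsBounded s) (hsample : ∀ n : ℕ, z n ∈ s)
    (hstep : ∀ t, 0 ≤ t → ‖z t - z ⌊t⌋₊‖ ≤ C) : ∃ M, ∀ t, 0 ≤ t → ‖z t‖ ≤ M := by
  obtain ⟨M, hM⟩ := isBounded_iff_forall_norm_le.1 hs
  exact ⟨M + C, fun t ht =>
    (norm_le_norm_add_norm_sub' _ _).trans (add_le_add (hM _ (hsample _)) (hstep t ht))⟩

theorem abs_fst_sub_le_of_div_le (hr₀ : 0 ≤ r₀) (hδ : 0 ≤ δ) (hc : 0 < c)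
    (hγ : IsAdmissibleGain L δ d c γ)
    (hsample : ∀ n : ℕ, |(z n).1 - xstar| ≤ max (δ + d / 2) (r₀ - n * (γ * (c / 2))))
    (hstep : ∀ t, 0 ≤ t → ‖z t - z ⌊t⌋₊‖ ≤ speedBound L δ * γ)
    (ht : (2 * r₀ / c + 1) / γ ≤ t) : |(z t).1 - xstar| ≤ δ + d := by
  have hγ0 := hγ.pos
  have hd := hγ.margin_pos hδ
  have ht0 : 0 ≤ t := le_trans (by positivity) ht
  have hcontracted : r₀ ≤ ⌊t⌋₊ * (γ * (c / 2)) := by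
    rw [div_le_iff₀ hγ0] at ht
    have hfloor : t * γ ≤ (⌊t⌋₊ + 1) * γ := by gcongr; exact (Nat.lt_floor_add_one t).le
    have hperiods : 2 * r₀ / c ≤ ⌊t⌋₊ * γ := by linarith [hγ.lt_one]
    rw [div_le_iff₀ hc] at hperiods
    linarith
  calc |(z t).1 - xstar| ≤ |(z t).1 - (z ⌊t⌋₊).1| + |(z ⌊t⌋₊).1 - xstar| := abs_sub_le _ _ _
    _ ≤ d / 2 + (δ + d / 2) := add_le_add
        (((norm_fst_le _).trans (hstep t ht0)).trans hγ.step_lt_margin.le)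
        ((hsample _).trans (max_le le_rfl (by linarith)))
    _ = δ + d := by ring

end SampledDynamics

theorem hpf_es_gamma_uniform_in_cost_general {α : ℝ → ℝ} (hα : ContinuousOn α (Ici 0))
    (hα_pos : ∀ s, 0 < s → 0 < α s) (L : ℝ≥0) {r₀ δ d : ℝ} (hr₀ : 0 ≤ r₀) (hδ : 0 < δ)
    (hd : 0 < d) :
    ∃ tbar γstar : ℝ, 0 < tbar ∧ 0 < γstar ∧
      ∀ h xstar, IsESCost α L xstar (r₀ + 2 * δ + d) h → ∀ γ ∈ Ioo 0 γstar,
        ∀ z, IsIntegralCurveOn z (hpfES h δ γ) (Ici 0) → |(z 0).1 - xstar| ≤ r₀ →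
          |(z 0).2 - a0 h δ (z 0).1 / 2| ≤ γstar →
          (∃ M, ∀ t, 0 ≤ t → ‖z t‖ ≤ M) ∧ ∀ t, tbar / γ ≤ t → |(z t).1 - xstar| ≤ δ + d := by
  have hc := ditherGain_pos hδ hα hα_pos
  obtain ⟨γstar, ⟨hγstar0, hγstar1⟩, hadm⟩ := exists_isAdmissibleGain L hδ hd hc
  refine ⟨2 * r₀ / ditherGain α δ + 1, γstar, by positivity, hγstar0,
    fun h xstar hcost γ hγ z hz hx₀ hy₀ => ?_⟩
  have hband := hy₀.trans (hγstar1.trans (one_le_filterTolerance (L := L) hδ.le))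
  have hsample :=
    abs_sub_le_max_and_mem_trackingRegion hα hα_pos hδ hcost (hadm γ hγ) hz hx₀ hband
  have hregion := fun n => (hsample n).2
  have hstep := fun t =>
    norm_sub_natFloor_le (t := t) hδ.le hcost (by linarith) (hadm γ hγ) hz hregion
  exact ⟨exists_norm_le_of_natFloor (isBounded_trackingRegion hδ.le (by linarith) hcost.lipschitz)
      hregion hstep,
    fun t => abs_fst_sub_le_of_div_le hr₀ hδ.le hc (hadm γ hγ) (fun n => (hsample n).1) hstep⟩

/-- Uniformity of `γ*` with respect to the cost magnitude: the parameter
bounds `t̄, γ*` for the HPF-ES scheme depend only on `α, L, r₀, δ, d`, not on the magnitude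
of the cost `h`. -/
theorem hpf_es_gamma_uniform_in_cost
    (α : ℝ → ℝ) (hα_cont : ContinuousOn α (Set.Ici 0))
    (hα_mono : StrictMonoOn α (Set.Ici 0)) (hα0 : α 0 = 0)
    (hα_top : Tendsto α atTop atTop)
    (L r₀ δ d : ℝ) (hL : 0 < L) (hr₀ : 0 < r₀) (hδ : 0 < δ) (hd : 0 < d) :
    ∃ tbar γstar : ℝ, 0 < tbar ∧ 0 < γstar ∧
      ∀ h : ℝ → ℝ, ContDiff ℝ (⊤ : ℕ∞) h →
        ∀ xstar : ℝ, (∀ x : ℝ, x ≠ xstar → h xstar < h x) →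
          (∀ x₁ x₂ : ℝ, (x₁ - xstar) * (x₂ - xstar) ≥ 0 → α |x₂ - x₁| ≤ |h x₂ - h x₁|) →
          (∀ u ∈ Set.Icc (xstar - (r₀ + 2 * δ + d)) (xstar + (r₀ + 2 * δ + d)),
            ∀ v ∈ Set.Icc (xstar - (r₀ + 2 * δ + d)) (xstar + (r₀ + 2 * δ + d)),
              |h u - h v| ≤ L * |u - v|) →
          ∀ γ : ℝ, γ ∈ Set.Ioo 0 γstar →
            ∀ x₀ ybar₀ : ℝ, |x₀ - xstar| ≤ r₀ → |ybar₀ - a0 h δ x₀ / 2| ≤ γstar →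
              ∀ x ybar : ℝ → ℝ, Differentiable ℝ x → Differentiable ℝ ybar →
                x 0 = x₀ → ybar 0 = ybar₀ →
                (∀ t : ℝ, 0 ≤ t →
                  HasDerivAt x
                    (-γ * (h (x t + δ * Real.sin (2 * Real.pi * t)) - ybar t)
                      * Real.sin (2 * Real.pi * t)) t) →
                (∀ t : ℝ, 0 ≤ t →
                  HasDerivAt ybar
                    (γ * (h (x t + δ * Real.sin (2 * Real.pi * t)) - ybar t)) t) →
                (∃ M : ℝ, ∀ t : ℝ, 0 ≤ t → |x t| ≤ M ∧ |ybar t| ≤ M) ∧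
                (∀ t : ℝ, tbar / γ ≤ t → |x t - xstar| ≤ δ + d) := by
  have hα_pos : ∀ s, 0 < s → 0 < α s := fun s hs =>
    hα0.symm.trans_lt (hα_mono self_mem_Ici hs.le hs)
  lift L to ℝ≥0 using hL.le
  obtain ⟨tbar, γstar, htbar, hγstar, hmain⟩ :=
    hpf_es_gamma_uniform_in_cost_general hα_cont hα_pos L hr₀.le hδ hd
  refine ⟨tbar, γstar, htbar, hγstar, ?_⟩
  intro h _ xstar hmin hgrowth hlip γ hγ x₀ ybar₀ hx₀ hy₀ x ybar _ _ hx0 hybar0 hx hybar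
  subst hx0 hybar0
  have hcost : IsESCost α L xstar (r₀ + 2 * δ + d) h :=
    { isMinOn := isMinOn_iff.2 fun u _ =>
        (eq_or_ne u xstar).elim (fun hu => (congrArg h hu).ge) fun hu => (hmin u hu).le
      growth := fun u _ v _ => hgrowth u v
      lipschitz := LipschitzOnWith.of_dist_le_mul hlip }
  obtain ⟨⟨M, hM⟩, hconv⟩ := hmain h xstar hcost γ hγ _ (isIntegralCurveOn_hpfES hx hybar) hx₀ hy₀
  exact ⟨⟨M, fun t ht => ⟨(norm_fst_le _).trans (hM t ht), (norm_snd_le _).trans (hM t ht)⟩⟩, hconv⟩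
end

section
/- (Oscillatory behaviour of the basic ES for large costs) Let J ⊆ ℝ be an open interval, h : ℝ → ℝ continuous with h(u) > 0 for all u ∈ J, and H : J → ℝ differentiable with H′(u) = 1/h(u) for all u ∈ J. If x₁ : [0,T] → J is differentiable and satisfies ẋ₁(t) = −γ·h(x₁(t))·sin(2πt) for all t ∈ [0,T], then H(x₁(t)) = H(x₁(0)) + (γ/(2π))·(cos(2πt) − 1) for all t ∈ [0,T]; in particular x₁(n) = x₁(0) for every natural number n with n ≤ T, i.e. the trajectory is a pure oscillation returning to its initial value at every period of the dither. -/
open Real Filter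

/-!
Along a solution of the separable equation `ẋ = h(x) g(t)` the primitive `H` of `1 / h` satisfies
`(H ∘ x)˙ = g`, so `H ∘ x` differs from a primitive `G` of `g` by a constant. By Rolle's theorem
`H` is injective, so `x` takes equal values at times where `G` does. For `g(t) = -γ sin(2πt)` one
has `G(t) = γ / (2π) cos(2πt)`, which takes the same value at all integers.
-/

theorem comp_sub_comp_eq_sub_of_separableODE {𝕜 : Type*} [RCLike 𝕜] {s J : Set 𝕜}
    {h g H G x : 𝕜 → 𝕜} (hs : Convex ℝ s) (hJ : Set.MapsTo x s J)
    (hne : ∀ u ∈ J, h u ≠ 0) (hH : ∀ u ∈ J, HasDerivWithinAt H (1 / h u) J u)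
    (hG : ∀ t ∈ s, HasDerivWithinAt G (g t) s t)
    (hx : ∀ t ∈ s, HasDerivWithinAt x (h (x t) * g t) s t) {t₀ t : 𝕜} (ht₀ : t₀ ∈ s) (ht : t ∈ s) :
    H (x t) - H (x t₀) = G t - G t₀ := by
  have hderiv : ∀ τ ∈ s, HasDerivWithinAt (fun τ ↦ H (x τ) - G τ) 0 s τ := fun τ hτ ↦ by
    have hcomp : HasDerivWithinAt (H ∘ x) (g τ) s τ :=
      ((hH _ (hJ hτ)).comp τ (hx τ hτ) hJ).congr_deriv (by field_simp [hne _ (hJ hτ)])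
    exact (hcomp.sub (hG τ hτ)).congr_deriv (sub_self _)
  have hconst : H (x t) - G t = H (x t₀) - G t₀ := by
    simpa [sub_eq_zero] using
      hs.norm_image_sub_le_of_norm_hasDerivWithin_le hderiv (fun _ _ ↦ norm_zero.le) ht₀ ht
  linear_combination hconst

theorem injOn_of_hasDerivWithinAt_ne_zero {f f' : ℝ → ℝ} {J : Set ℝ} (hJ : J.OrdConnected)
    (hf : ∀ u ∈ J, HasDerivWithinAt f (f' u) J u) (hne : ∀ u ∈ J, f' u ≠ 0) :
    Set.InjOn f J := by
  intro u hu v hv hfuv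
  by_contra huv
  wlog hlt : u < v generalizing u v
  · exact this hv hu hfuv.symm (Ne.symm huv) (lt_of_le_of_ne (not_lt.mp hlt) (Ne.symm huv))
  have hsub : Set.Icc u v ⊆ J := hJ.out hu hv
  obtain ⟨c, hc, hc0⟩ := exists_hasDerivAt_eq_zero hlt
    (fun w hw ↦ ((hf w (hsub hw)).mono hsub).continuousWithinAt) hfuv
    fun w hw ↦ ((hf w (hsub (Set.Ioo_subset_Icc_self hw))).mono hsub).hasDerivAt
      (Icc_mem_nhds hw.1 hw.2)
  exact hne c (hsub (Set.Ioo_subset_Icc_self hc)) hc0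

theorem hasDerivAt_div_mul_cos_mul (A : ℝ) {ω : ℝ} (hω : ω ≠ 0) (t : ℝ) :
    HasDerivAt (fun t ↦ A / ω * cos (ω * t)) (-A * sin (ω * t)) t := by
  refine ((((hasDerivAt_id t).const_mul ω).cos).const_mul (A / ω)).congr_deriv ?_
  simp only [id_eq]
  field_simp

theorem support_system_pure_oscillation_general {J : Set ℝ} (hJ : J.OrdConnected) {h H : ℝ → ℝ}
    (hne : ∀ u ∈ J, h u ≠ 0) (hH : ∀ u ∈ J, HasDerivWithinAt H (1 / h u) J u)
    {γ T : ℝ} {x₁ : ℝ → ℝ} (hmem : Set.MapsTo x₁ (Set.Icc 0 T) J)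
    (hsol : ∀ t ∈ Set.Icc 0 T,
      HasDerivWithinAt x₁ (-γ * h (x₁ t) * sin (2 * π * t)) (Set.Icc 0 T) t) :
    (∀ t ∈ Set.Icc 0 T, H (x₁ t) = H (x₁ 0) + γ / (2 * π) * (cos (2 * π * t) - 1)) ∧
    (∀ n : ℕ, (n : ℝ) ≤ T → x₁ n = x₁ 0) := by
  have zero_mem {t : ℝ} (ht : t ∈ Set.Icc 0 T) : (0 : ℝ) ∈ Set.Icc 0 T :=
    ⟨le_rfl, ht.1.trans ht.2⟩
  have hcos : ∀ t ∈ Set.Icc 0 T,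
      H (x₁ t) = H (x₁ 0) + γ / (2 * π) * (cos (2 * π * t) - 1) := fun t ht ↦ by
    have hdiff := comp_sub_comp_eq_sub_of_separableODE (convex_Icc 0 T) hmem hne hH
      (fun τ _ ↦ (hasDerivAt_div_mul_cos_mul γ two_pi_pos.ne' τ).hasDerivWithinAt)
      (fun τ hτ ↦ (hsol τ hτ).congr_deriv (by ring)) (zero_mem ht) ht
    rw [mul_zero, cos_zero] at hdiff
    linear_combination hdiff
  refine ⟨hcos, fun n hn ↦ ?_⟩
  have hn_mem : (n : ℝ) ∈ Set.Icc 0 T := ⟨n.cast_nonneg, hn⟩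
  have hinj : Set.InjOn H J :=
    injOn_of_hasDerivWithinAt_ne_zero hJ hH fun u hu ↦ one_div_ne_zero (hne u hu)
  refine hinj (hmem hn_mem) (hmem (zero_mem hn_mem)) ?_
  rw [hcos n hn_mem, mul_comm (2 * π), cos_nat_mul_two_pi, sub_self, mul_zero, add_zero]

/-- Oscillatory behaviour of the basic ES for large costs: the support system
`ẋ₁ = -γ h(x₁) sin(2πt)` has purely oscillatory solutions, returning to the initial value at
every period of the dither. -/
theorem support_system_pure_oscillation
    (a b : ℝ) (h : ℝ → ℝ) (hc : Continuous h)
    (hpos : ∀ u ∈ Set.Ioo a b, 0 < h u)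
    (H : ℝ → ℝ) (hH : ∀ u ∈ Set.Ioo a b, HasDerivAt H (1 / h u) u)
    (γ : ℝ) (hγ : 0 < γ) (T : ℝ) (hT : 0 ≤ T)
    (x₁ : ℝ → ℝ)
    (hmem : ∀ t ∈ Set.Icc 0 T, x₁ t ∈ Set.Ioo a b)
    (hsol : ∀ t ∈ Set.Icc 0 T,
      HasDerivAt x₁ (-γ * h (x₁ t) * Real.sin (2 * Real.pi * t)) t) :
    (∀ t ∈ Set.Icc 0 T,
      H (x₁ t) = H (x₁ 0) + γ / (2 * Real.pi) * (Real.cos (2 * Real.pi * t) - 1)) ∧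
    (∀ n : ℕ, (n : ℝ) ≤ T → x₁ n = x₁ 0) :=
  support_system_pure_oscillation_general Set.ordConnected_Ioo (fun u hu ↦ (hpos u hu).ne')
    (fun u hu ↦ (hH u hu).hasDerivWithinAt) hmem fun t ht ↦ (hsol t ht).hasDerivWithinAt
end
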